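/- There exists ε₀ > 0 such that for every z ∈ U with 0 < ‖z‖ ≤ ε₀ and f(z) ≠ 0, the two vectors z and grad log f(z) are either linearly independent over ℂ, or else grad log f(z) = λ•z where λ is a non-zero complex number whose principal argument has absolute value less than π/4. -/

import Mathlib

/-!
Suppose there were points `z → 0` with `f z ≠ 0` at which `grad log f (z) = λ z` and
`Re λ ≤ |Im λ|`. They satisfy a real-analytic equation (the gradient is parallel to `z`), an
inequation and an inequality, so the curve selection lemma gives a real-analytic arc `γ` of such
points with `γ 0 = 0`. Along it the gradient being parallel to `γ` means that
`‖γ‖² ⟪f ∘ γ, (f ∘ γ)'⟫ = Df(γ)(γ) * conj (f γ) * ⟪γ, γ'⟫`. A nonzero analytic arc `δ` with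
`δ 0 = 0` is `t ^ k • w` with `k > 0` and `w 0 ≠ 0`, so `⟪δ, δ'⟫` is a power of `t` times a
function whose limit is positive. Applied to `f ∘ γ` and to `γ`, this shows that
`Df(γ)(γ) * conj (f γ)`, which is a positive multiple of `conj λ`, has argument tending to `0`: a
contradiction.

Curve selection is an induction on the dimension, for the clopen subsets `A` of a locus
`g = 0 ≠ H`. If `g` is not identically zero, then Weierstrass preparation makes `g` and `H`
polynomial in one variable. The minimal polynomial of that variable at an ultrafilter converging
to the origin within `A` has simple roots, so the points below `A` again form a clopen subset of
a locus, which contains an arc by induction; the arc lifts to `A` because Puiseux's theorem makes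
the roots above it analytic. If `g = 0`, then `A` is open, and the points where `H ^ 2` is
maximal on `A` within a sphere are critical for a rotation field, which supplies an equation that
is not identically zero.
-/

/-- `grad log f (x) = grad f(x) / conj (f x)`, where `grad f(x)` is the Hermitian
gradient of `f` at `x`: the unique vector with `⟪grad f x, v⟫ = Df(x)(v)` for all `v`. -/
noncomputable def gradLog {n : ℕ} (f : EuclideanSpace ℂ (Fin n) → ℂ)
    (x : EuclideanSpace ℂ (Fin n)) : EuclideanSpace ℂ (Fin n) :=
  ((starRingEnd ℂ) (f x))⁻¹ • gradient f x

open Filter Topology Polynomial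
open scoped BoundedContinuousFunction ENNReal NNReal ContDiff

section BoundedCoefficients

variable {𝕜 : Type*} [RCLike 𝕜]

/-- The Banach space of bounded sequences, thought of as coefficient sequences of power series
converging in the open unit disc. -/
abbrev BoundedCoeffs (𝕜 : Type*) [RCLike 𝕜] : Type _ := ℕ →ᵇ 𝕜

namespace BoundedCoeffs

/-- The coefficient sequence of the monomial of degree `j`. -/
noncomputable def monomial (𝕜 : Type*) [RCLike 𝕜] (j : ℕ) : BoundedCoeffs 𝕜 :=
  .ofNormedAddCommGroupDiscrete (fun n ↦ if n = j then 1 else 0) 1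
    fun n ↦ by split_ifs <;> simp

theorem monomial_apply (j n : ℕ) : monomial 𝕜 j n = if n = j then 1 else 0 := rfl

theorem norm_monomial_le (j : ℕ) : ‖monomial 𝕜 j‖ ≤ 1 :=
  (BoundedContinuousFunction.norm_le zero_le_one).2 fun n ↦ by
    rw [monomial_apply]; split_ifs <;> simp

/-- The value at `η` of the power series with the given coefficients; meaningful for
`‖η‖ < 1`. -/
noncomputable def eval (η : 𝕜) : BoundedCoeffs 𝕜 →L[𝕜] 𝕜 :=
  ∑' n, η ^ n • BoundedContinuousFunction.evalCLM 𝕜 n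

theorem norm_pow_smul_evalCLM_le (η : 𝕜) (n : ℕ) :
    ‖η ^ n • (BoundedContinuousFunction.evalCLM 𝕜 n : BoundedCoeffs 𝕜 →L[𝕜] 𝕜)‖ ≤ ‖η‖ ^ n := by
  rw [norm_smul, norm_pow]
  refine mul_le_of_le_one_right (by positivity)
    (ContinuousLinearMap.opNorm_le_bound _ zero_le_one fun a ↦ ?_)
  rw [one_mul]
  exact a.norm_coe_le_norm n

theorem hasSum_eval (a : BoundedCoeffs 𝕜) {η : 𝕜} (hη : ‖η‖ < 1) :
    HasSum (fun n ↦ a n * η ^ n) (eval η a) := by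
  have hsum := (Summable.of_norm_bounded (summable_geometric_of_lt_one (norm_nonneg η) hη)
    (norm_pow_smul_evalCLM_le η)).hasSum.mapL (ContinuousLinearMap.apply 𝕜 𝕜 a)
  exact hsum.congr_fun fun n ↦ by simp [mul_comm]

theorem continuousAt_eval_zero : ContinuousAt (eval (𝕜 := 𝕜)) 0 := by
  have hcont : ContinuousOn (eval (𝕜 := 𝕜)) (Metric.closedBall 0 (1 / 2)) := by
    refine continuousOn_tsum
      (f := fun n η ↦ η ^ n • BoundedContinuousFunction.evalCLM (β := 𝕜) 𝕜 n) (fun n ↦ by fun_prop)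
      (summable_geometric_of_lt_one one_half_pos.le one_half_lt_one) fun n η hη ↦ ?_
    refine (norm_pow_smul_evalCLM_le η n).trans ?_
    gcongr
    exact mem_closedBall_zero_iff.1 hη
  exact hcont.continuousAt (Metric.closedBall_mem_nhds 0 one_half_pos)

theorem eval_zero (a : BoundedCoeffs 𝕜) : eval 0 a = a 0 := by
  refine (a.hasSum_eval (by simp)).unique ?_
  convert! hasSum_single (f := fun n ↦ a n * 0 ^ n) 0 fun n hn ↦ ?_ using 1
  · simp
  · simp [hn]

theorem eval_monomial {η : 𝕜} (hη : ‖η‖ < 1) (j : ℕ) : eval η (monomial 𝕜 j) = η ^ j := by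
  refine (hasSum_eval _ hη).unique ?_
  convert! hasSum_single (f := fun n ↦ monomial 𝕜 j n * η ^ n) j fun n hn ↦ ?_ using 1
  · simp [monomial_apply]
  · simp [monomial_apply, hn]

/-- Multiplication by the variable. -/
noncomputable def shift : BoundedCoeffs 𝕜 →L[𝕜] BoundedCoeffs 𝕜 :=
  LinearMap.mkContinuous
    { toFun a := .ofNormedAddCommGroupDiscrete (fun n ↦ n.casesOn 0 a) ‖a‖ fun n ↦ by
        cases n
        · simp
        · exact a.norm_coe_le_norm _
      map_add' a b := by ext (_ | n) <;> simp
      map_smul' c a := by ext (_ | n) <;> simp }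
    1 fun a ↦ by
      rw [one_mul]
      exact (BoundedContinuousFunction.norm_le (norm_nonneg a)).2 fun n ↦ by
        cases n
        · simp
        · exact a.norm_coe_le_norm _

theorem shift_apply_zero (a : BoundedCoeffs 𝕜) : shift a 0 = 0 := rfl

theorem shift_apply_succ (a : BoundedCoeffs 𝕜) (n : ℕ) : shift a (n + 1) = a n := rfl

theorem eval_shift (a : BoundedCoeffs 𝕜) {η : 𝕜} (hη : ‖η‖ < 1) :
    eval η (shift a) = η * eval η a := by
  have hsum := (hasSum_nat_add_iff' 1).2 ((shift a).hasSum_eval hη)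
  simp only [shift_apply_succ, Finset.sum_range_one, shift_apply_zero, zero_mul, sub_zero] at hsum
  refine hsum.unique (((a.hasSum_eval hη).mul_left η).congr_fun fun n ↦ ?_)
  ring

theorem eval_shift_pow (k : ℕ) (a : BoundedCoeffs 𝕜) {η : 𝕜} (hη : ‖η‖ < 1) :
    eval η ((shift ^ k) a) = η ^ k * eval η a := by
  induction k with
  | zero => simp
  | succ k ih => rw [pow_succ', mul_apply_eq_comp, eval_shift _ hη, ih, pow_succ',
      mul_assoc]

/-- The formal power series with the given coefficients. -/
noncomputable def toPowerSeries : BoundedCoeffs 𝕜 →ₗ[𝕜] PowerSeries 𝕜 where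
  toFun a := PowerSeries.mk a
  map_add' a b := by ext; simp
  map_smul' c a := by ext; simp

theorem coeff_toPowerSeries (a : BoundedCoeffs 𝕜) (n : ℕ) :
    PowerSeries.coeff n a.toPowerSeries = a n :=
  PowerSeries.coeff_mk n a

theorem toPowerSeries_injective : Function.Injective (toPowerSeries (𝕜 := 𝕜)) := fun a b h ↦ by
  ext n
  rw [← coeff_toPowerSeries, h, coeff_toPowerSeries]

theorem toPowerSeries_shift_pow (k : ℕ) (a : BoundedCoeffs 𝕜) :
    ((shift ^ k) a).toPowerSeries = PowerSeries.X ^ k * a.toPowerSeries := by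
  induction k with
  | zero => simp
  | succ k ih =>
    rw [pow_succ', mul_apply_eq_comp, pow_succ', mul_assoc, ← ih]
    ext (_ | n)
    · simp [coeff_toPowerSeries, shift_apply_zero]
    · simp [coeff_toPowerSeries, shift_apply_succ, PowerSeries.coeff_succ_X_mul]

theorem exists_shift_pow_eq {k : ℕ} {a : BoundedCoeffs 𝕜} (ha : ∀ j < k, a j = 0) :
    ∃ u : BoundedCoeffs 𝕜, (shift ^ k) u = a ∧ ∀ n, u n = a (n + k) := by
  let u : BoundedCoeffs 𝕜 := .ofNormedAddCommGroupDiscrete (fun n ↦ a (n + k)) ‖a‖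
    fun n ↦ a.norm_coe_le_norm _
  refine ⟨u, toPowerSeries_injective ?_, fun n ↦ rfl⟩
  ext n
  rw [toPowerSeries_shift_pow, PowerSeries.coeff_X_pow_mul', coeff_toPowerSeries]
  split_ifs with hkn
  · rw [coeff_toPowerSeries]
    exact congrArg a (Nat.sub_add_cancel hkn)
  · exact (ha n (not_le.1 hkn)).symm.trans (coeff_toPowerSeries a n).symm

end BoundedCoeffs

end BoundedCoefficients

section SplitSeries

variable {𝕜 V : Type*} [RCLike 𝕜] [NormedAddCommGroup V] [NormedSpace 𝕜 V]

namespace BoundedCoeffs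

/-- The power series on `V × 𝕜` obtained from `p` by recording, for each monomial in
`(x, y) ∈ V × 𝕜`, its degree in `y`: its value at `(x, ρ)` lists the coefficients of
`η ↦ ∑ n, p n (x, ρ η)`. -/
noncomputable def splitSeries (p : FormalMultilinearSeries 𝕜 (V × 𝕜) 𝕜) :
    FormalMultilinearSeries 𝕜 (V × 𝕜) (BoundedCoeffs 𝕜) := fun n ↦
  ∑ s : Finset (Fin n), ((p n).compContinuousLinearMap fun i ↦
    if i ∈ s then .inr 𝕜 V 𝕜 ∘L .snd 𝕜 V 𝕜 else .inl 𝕜 V 𝕜 ∘L .fst 𝕜 V 𝕜).smulRight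
      (monomial 𝕜 s.card)

theorem norm_splitSeries_le (p : FormalMultilinearSeries 𝕜 (V × 𝕜) 𝕜) (n : ℕ) :
    ‖splitSeries p n‖ ≤ 2 ^ n * ‖p n‖ := by
  refine (norm_sum_le_of_le (n := fun _ ↦ ‖p n‖) _ fun s _ ↦ ?_).trans_eq (by simp)
  rw [ContinuousMultilinearMap.norm_smulRight]
  refine (mul_le_of_le_one_right (norm_nonneg _) (norm_monomial_le _)).trans
    (((p n).norm_compContinuousLinearMap_le _).trans
      (mul_le_of_le_one_right (norm_nonneg _) (Finset.prod_le_one (fun _ _ ↦ norm_nonneg _) ?_)))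
  intro i _
  split_ifs
  · exact (ContinuousLinearMap.opNorm_comp_le _ _).trans (mul_le_one₀
      (ContinuousLinearMap.norm_inr_le_one 𝕜 V 𝕜) (norm_nonneg _)
      (ContinuousLinearMap.norm_snd_le 𝕜 V 𝕜))
  · exact (ContinuousLinearMap.opNorm_comp_le _ _).trans (mul_le_one₀
      (ContinuousLinearMap.norm_inl_le_one 𝕜 V 𝕜) (norm_nonneg _)
      (ContinuousLinearMap.norm_fst_le 𝕜 V 𝕜))

theorem le_radius_splitSeries {p : FormalMultilinearSeries 𝕜 (V × 𝕜) 𝕜} {r : ℝ≥0}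
    (hr : r < p.radius) : ((r / 2 : ℝ≥0) : ℝ≥0∞) ≤ (splitSeries p).radius := by
  obtain ⟨C, -, hC⟩ := p.norm_mul_pow_le_of_lt_radius hr
  refine FormalMultilinearSeries.le_radius_of_bound _ C fun n ↦ ?_
  calc ‖splitSeries p n‖ * ((r / 2 : ℝ≥0) : ℝ) ^ n
      ≤ 2 ^ n * ‖p n‖ * ((r / 2 : ℝ≥0) : ℝ) ^ n := by gcongr; exact norm_splitSeries_le p n
    _ = ‖p n‖ * (r : ℝ) ^ n := by
      rw [NNReal.coe_div, NNReal.coe_ofNat, div_pow]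
      field_simp
    _ ≤ C := hC n

theorem eval_splitSeries (p : FormalMultilinearSeries 𝕜 (V × 𝕜) 𝕜) (n : ℕ) (x : V) (y : 𝕜)
    {η : 𝕜} (hη : ‖η‖ < 1) :
    eval η (splitSeries p n fun _ ↦ (x, y)) = p n fun _ ↦ (x, η * y) := by
  have hadd : (fun _ : Fin n ↦ (x, η * y)) =
      (fun _ ↦ η • ((0 : V), y)) + fun _ ↦ ((x, 0) : V × 𝕜) := by
    ext <;> simp
  rw [hadd, ContinuousMultilinearMap.map_add_univ, splitSeries, sum_apply,
    map_sum]
  refine Finset.sum_congr rfl fun s _ ↦ ?_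
  have hsplit : s.piecewise (fun _ ↦ η • ((0 : V), y)) (fun _ ↦ ((x, 0) : V × 𝕜)) =
      s.piecewise (fun i ↦ η • s.piecewise (fun _ ↦ ((0 : V), y)) (fun _ ↦ (x, 0)) i)
        (s.piecewise (fun _ ↦ ((0 : V), y)) (fun _ ↦ (x, 0))) := by
    ext i : 1
    by_cases hi : i ∈ s <;> simp [hi]
  rw [hsplit, ContinuousMultilinearMap.map_piecewise_smul, Finset.prod_const,
    ContinuousMultilinearMap.smulRight_apply, map_smul, eval_monomial hη, smul_eq_mul, smul_eq_mul,
    mul_comm, ContinuousMultilinearMap.compContinuousLinearMap_apply]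
  congr 2
  ext i : 1
  by_cases hi : i ∈ s <;> simp [hi]

theorem exists_analyticAt_eval_eq {f : V × 𝕜 → 𝕜} (hf : AnalyticAt 𝕜 f 0) :
    ∃ ρ : ℝ, 0 < ρ ∧ ∃ a : V → BoundedCoeffs 𝕜, AnalyticAt 𝕜 a 0 ∧
      ∀ x, ‖x‖ < ρ → ∀ η : 𝕜, ‖η‖ < 1 → eval η (a x) = f (x, η * (ρ : 𝕜)) := by
  obtain ⟨p, R, hp⟩ := hf
  obtain ⟨r, hr0, hrR⟩ := ENNReal.lt_iff_exists_nnreal_btwn.1 hp.r_pos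
  replace hr0 : 0 < r := by exact_mod_cast hr0
  have hrp : (r : ℝ≥0∞) < p.radius := hrR.trans_le hp.r_le
  have hsplit := (splitSeries p).hasFPowerSeriesOnBall
    ((ENNReal.coe_pos.2 (half_pos hr0)).trans_le (le_radius_splitSeries hrp))
  have hmem (x : V) (hx : ‖x‖ < r / 4) (y : 𝕜) (hy : ‖y‖ ≤ r / 4) :
      ‖(x, y)‖₊ < r / 2 := by
    rw [← NNReal.coe_lt_coe, coe_nnnorm, Prod.norm_def, NNReal.coe_div, NNReal.coe_ofNat]
    have : (0 : ℝ) < r := hr0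
    exact max_lt (by linarith) (by linarith)
  have hρ : ‖((r / 4 : ℝ) : 𝕜)‖ = r / 4 := by simp
  have hr4 : (0 : ℝ) < r / 4 := by positivity
  refine ⟨r / 4, hr4, fun x ↦ (splitSeries p).sum (x, ((r / 4 : ℝ) : 𝕜)), ?_, ?_⟩
  · refine AnalyticAt.comp₂ (h := (splitSeries p).sum) ?_ analyticAt_id analyticAt_const
    refine hsplit.analyticAt_of_mem (Metric.mem_eball.2 ?_)
    rw [edist_zero_right]
    exact (ENNReal.coe_lt_coe.2 (hmem 0 (by simpa) _ hρ.le)).trans_le (le_radius_splitSeries hrp)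
  · intro x hx η hη
    have hsum := (hsplit.hasSum (y := (x, ((r / 4 : ℝ) : 𝕜))) (Metric.mem_eball.2 ?_)).mapL
      (eval η)
    · simp only [eval_splitSeries _ _ _ _ hη, zero_add] at hsum
      refine hsum.unique ?_
      have := hp.hasSum (y := (x, η * ((r / 4 : ℝ) : 𝕜))) (Metric.mem_eball.2 ?_)
      · simpa only [zero_add] using this
      rw [edist_zero_right]
      refine (ENNReal.coe_lt_coe.2 ((hmem x hx _ ?_).trans (half_lt_self hr0))).trans hrR
      rw [norm_mul, hρ]
      exact mul_le_of_le_one_left hr4.le hη.le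
    · rw [edist_zero_right]
      exact (ENNReal.coe_lt_coe.2 (hmem x hx _ hρ.le)).trans_le (le_radius_splitSeries hrp)

end BoundedCoeffs

end SplitSeries

section MonicMul

variable {𝕜 V : Type*} [RCLike 𝕜] [NormedAddCommGroup V] [NormedSpace 𝕜 V]

namespace BoundedCoeffs

/-- The product of the series `u` with the monic polynomial of degree `k` whose lower
coefficients are `c`. -/
noncomputable def monicMul (k : ℕ) (p : BoundedCoeffs 𝕜 × (Fin k → 𝕜)) : BoundedCoeffs 𝕜 :=
  (shift ^ k) p.1 + ∑ j, p.2 j • (shift ^ (j : ℕ)) p.1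

/-- The derivative of `monicMul k` at `(u, 0)`. -/
noncomputable def monicMulDeriv (k : ℕ) (u : BoundedCoeffs 𝕜) :
    BoundedCoeffs 𝕜 × (Fin k → 𝕜) →L[𝕜] BoundedCoeffs 𝕜 :=
  (shift ^ k) ∘L .fst 𝕜 _ _ +
    ∑ j : Fin k, (.proj j ∘L .snd 𝕜 _ _).smulRight ((shift ^ (j : ℕ)) u)

theorem monicMulDeriv_apply (k : ℕ) (u v : BoundedCoeffs 𝕜) (c : Fin k → 𝕜) :
    monicMulDeriv k u (v, c) = (shift ^ k) v + ∑ j, c j • (shift ^ (j : ℕ)) u := by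
  simp [monicMulDeriv]

theorem contDiff_monicMul (k : ℕ) : ContDiff 𝕜 ω (monicMul (𝕜 := 𝕜) k) := by
  unfold monicMul
  fun_prop

theorem hasFDerivAt_monicMul (k : ℕ) (u : BoundedCoeffs 𝕜) :
    HasFDerivAt (monicMul k) (monicMulDeriv k u) (u, 0) := by
  have hterm (j : Fin k) : HasFDerivAt
      (fun p : BoundedCoeffs 𝕜 × (Fin k → 𝕜) ↦ p.2 j • (shift ^ (j : ℕ)) p.1)
      ((ContinuousLinearMap.proj j ∘L .snd 𝕜 _ _).smulRight ((shift ^ (j : ℕ)) u)) (u, 0) := by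
    have hc := (ContinuousLinearMap.proj j ∘L .snd 𝕜 (BoundedCoeffs 𝕜) (Fin k → 𝕜)).hasFDerivAt
      (x := (u, 0))
    have hs := ((shift ^ (j : ℕ)) ∘L .fst 𝕜 (BoundedCoeffs 𝕜) (Fin k → 𝕜)).hasFDerivAt
      (x := (u, 0))
    refine (hc.smul hs).congr_fderiv ?_
    refine ContinuousLinearMap.ext fun p ↦ ?_
    simp
  exact ((shift ^ k) ∘L .fst 𝕜 _ _).hasFDerivAt.add (.fun_sum fun j _ ↦ hterm j)

theorem toPowerSeries_monicMulDeriv (k : ℕ) (u v : BoundedCoeffs 𝕜) (c : Fin k → 𝕜) :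
    (monicMulDeriv k u (v, c)).toPowerSeries = PowerSeries.X ^ k * v.toPowerSeries +
      (∑ j, PowerSeries.C (c j) * PowerSeries.X ^ (j : ℕ)) * u.toPowerSeries := by
  simp only [monicMulDeriv_apply, map_add, map_sum, map_smul, toPowerSeries_shift_pow,
    Finset.sum_mul, PowerSeries.smul_eq_C_mul, mul_assoc]

theorem coeff_sum_C_mul_X_pow {k : ℕ} (c : Fin k → 𝕜) (i : Fin k) :
    PowerSeries.coeff (i : ℕ) (∑ j, PowerSeries.C (c j) * PowerSeries.X ^ (j : ℕ)) = c i := by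
  simp [PowerSeries.coeff_X_pow, Fin.val_inj]

theorem isUnit_toPowerSeries {u : BoundedCoeffs 𝕜} (hu : u 0 ≠ 0) : IsUnit u.toPowerSeries := by
  rw [PowerSeries.isUnit_iff_constantCoeff, ← PowerSeries.coeff_zero_eq_constantCoeff_apply,
    coeff_toPowerSeries]
  exact hu.isUnit

theorem monicMulDeriv_injective (k : ℕ) {u : BoundedCoeffs 𝕜} (hu : u 0 ≠ 0) :
    Function.Injective (monicMulDeriv k u) := by
  rw [injective_iff_map_eq_zero]
  rintro ⟨v, c⟩ h
  have hseries := (toPowerSeries_monicMulDeriv k u v c).symm.trans (by rw [h, map_zero])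
  have hdvd : PowerSeries.X ^ k ∣ ∑ j, PowerSeries.C (c j) * PowerSeries.X ^ (j : ℕ) := by
    rw [← (isUnit_toPowerSeries hu).dvd_mul_right, ← dvd_add_right (dvd_mul_right _ _), hseries]
    exact dvd_zero _
  have hc : c = 0 := by
    ext i
    rw [← coeff_sum_C_mul_X_pow c i]
    exact PowerSeries.X_pow_dvd_iff.1 hdvd i i.2
  have hv : v.toPowerSeries = 0 := by
    simpa [hc, PowerSeries.X_ne_zero] using hseries
  rw [hc, toPowerSeries_injective (hv.trans (map_zero _).symm)]
  rfl

theorem monicMulDeriv_surjective (k : ℕ) {u : BoundedCoeffs 𝕜} (hu : u 0 ≠ 0) :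
    Function.Surjective (monicMulDeriv k u) := by
  intro b
  obtain ⟨w, hw⟩ := (isUnit_toPowerSeries hu).dvd (a := b.toPowerSeries)
  let c : Fin k → 𝕜 := fun j ↦ PowerSeries.coeff j w
  have hc : PowerSeries.X ^ k ∣ w - ∑ j, PowerSeries.C (c j) * PowerSeries.X ^ (j : ℕ) :=
    PowerSeries.X_pow_dvd_iff.2 fun i hi ↦ by
      rw [map_sub, coeff_sum_C_mul_X_pow c ⟨i, hi⟩, sub_self]
  have hrem : (b - monicMulDeriv k u (0, c)).toPowerSeries =
      u.toPowerSeries * (w - ∑ j, PowerSeries.C (c j) * PowerSeries.X ^ (j : ℕ)) := by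
    rw [map_sub, toPowerSeries_monicMulDeriv, map_zero, mul_zero, zero_add, hw]
    ring
  obtain ⟨v, hv, -⟩ := exists_shift_pow_eq (k := k) (a := b - monicMulDeriv k u (0, c))
    fun j hj ↦ by
      rw [← coeff_toPowerSeries, hrem]
      exact PowerSeries.X_pow_dvd_iff.1 (hc.mul_left _) j hj
  refine ⟨(v, c), ?_⟩
  have : (v, c) = (v, 0) + (0, c) := by simp
  rw [this, map_add, ← eq_sub_iff_add_eq, ← hv]
  simp [monicMulDeriv_apply]

/-- The inverse function theorem for `monicMul`, which is Weierstrass preparation for families of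
coefficient sequences. -/
theorem exists_eventually_eq_monicMul {a : V → BoundedCoeffs 𝕜} {x₀ : V}
    (ha : AnalyticAt 𝕜 a x₀) {k : ℕ} {u₀ : BoundedCoeffs 𝕜} (hu₀ : u₀ 0 ≠ 0)
    (hau : a x₀ = (shift ^ k) u₀) :
    ∃ (u : V → BoundedCoeffs 𝕜) (c : V → Fin k → 𝕜), ContinuousAt u x₀ ∧ AnalyticAt 𝕜 c x₀ ∧
      u x₀ = u₀ ∧ c x₀ = 0 ∧ ∀ᶠ x in 𝓝 x₀, a x = monicMul k (u x, c x) := by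
  let L : (BoundedCoeffs 𝕜 × (Fin k → 𝕜)) ≃L[𝕜] BoundedCoeffs 𝕜 :=
    .ofBijective (monicMulDeriv k u₀) (LinearMap.ker_eq_bot.2 (monicMulDeriv_injective k hu₀))
      (LinearMap.range_eq_top.2 (monicMulDeriv_surjective k hu₀))
  have hL : HasFDerivAt (monicMul k) (L : _ →L[𝕜] BoundedCoeffs 𝕜) (u₀, 0) :=
    hasFDerivAt_monicMul k u₀
  have hsmooth : ContDiffAt 𝕜 ω (monicMul (𝕜 := 𝕜) k) (u₀, 0) := (contDiff_monicMul k).contDiffAt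
  have hω : (ω : WithTop ℕ∞) ≠ 0 := by simp
  let inv := hsmooth.localInverse hL hω
  have hbase : monicMul k (u₀, 0) = a x₀ := by simp [monicMul, hau]
  have hinv : AnalyticAt 𝕜 inv (a x₀) := hbase ▸ (hsmooth.to_localInverse hL hω).analyticAt
  have hinv₀ : inv (a x₀) = (u₀, 0) := hbase ▸ hsmooth.localInverse_apply_image hL hω
  have hinva := hinv.comp ha
  refine ⟨fun x ↦ (inv (a x)).1, fun x ↦ (inv (a x)).2,
    continuousAt_fst.comp hinva.continuousAt, ?_, congrArg Prod.fst hinv₀,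
    congrArg Prod.snd hinv₀, ?_⟩
  · exact (ContinuousLinearMap.snd 𝕜 _ _).analyticAt _ |>.comp hinva
  · have hright := (hsmooth.hasStrictFDerivAt' hL hω).eventually_right_inverse
    rw [hbase] at hright
    filter_upwards [ha.continuousAt.eventually hright] with x hx using hx.symm

end BoundedCoeffs

end MonicMul

section AnalyticSubring

variable (𝕜 : Type*) {V : Type*} [NontriviallyNormedField 𝕜] [NormedAddCommGroup V]
  [NormedSpace 𝕜 V]

/-- The ring of functions on `V` that are analytic at the origin. Polynomials over it are the
analytic families of polynomials parametrized by a neighbourhood of the origin. -/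
def analyticSubring (V : Type*) [NormedAddCommGroup V] [NormedSpace 𝕜 V] : Subring (V → 𝕜) where
  carrier := {a | AnalyticAt 𝕜 a 0}
  mul_mem' ha hb := ha.mul hb
  one_mem' := analyticAt_const
  add_mem' ha hb := ha.add hb
  zero_mem' := analyticAt_const
  neg_mem' ha := ha.neg

variable {𝕜}

/-- Evaluation at `x` of functions analytic at the origin. -/
def evalAt (x : V) : analyticSubring 𝕜 V →+* 𝕜 :=
  (Pi.evalRingHom _ x).comp (analyticSubring 𝕜 V).subtype

theorem evalAt_apply (x : V) (a : analyticSubring 𝕜 V) : evalAt x a = (a : V → 𝕜) x :=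
  rfl

/-- The member at `x` of an analytic family of polynomials. -/
noncomputable def specialize (x : V) : (analyticSubring 𝕜 V)[X] →+* 𝕜[X] :=
  mapRingHom (evalAt x)

theorem coeff_specialize (x : V) (P : (analyticSubring 𝕜 V)[X]) (n : ℕ) :
    (specialize x P).coeff n = (P.coeff n : V → 𝕜) x :=
  coeff_map _ n

theorem specialize_C (x : V) (a : analyticSubring 𝕜 V) :
    specialize x (C a) = C ((a : V → 𝕜) x) :=
  map_C _

theorem specialize_X (x : V) : specialize x (X : (analyticSubring 𝕜 V)[X]) = X :=
  map_X _

theorem analyticAt_eval_specialize (P : (analyticSubring 𝕜 V)[X]) (y : 𝕜) :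
    AnalyticAt 𝕜 (fun p : V × 𝕜 ↦ (specialize p.1 P).eval p.2) (0, y) := by
  induction P using Polynomial.induction_on' with
  | add P Q hP hQ => simpa only [map_add, eval_add] using! hP.add hQ
  | monomial n a =>
    simp only [← C_mul_X_pow_eq_monomial, map_mul, map_pow, specialize_C, specialize_X, eval_mul,
      eval_C, eval_pow, eval_X]
    exact (AnalyticAt.fun_comp_of_eq a.2 analyticAt_fst rfl).mul (analyticAt_snd.pow n)

end AnalyticSubring

section WeierstrassPreparation

variable {𝕜 V : Type*} [RCLike 𝕜] [NormedAddCommGroup V] [NormedSpace 𝕜 V]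

theorem eq_of_pow_mul_eventuallyEq {k l : ℕ} {g h : 𝕜 → 𝕜} (hg : ContinuousAt g 0)
    (hh : ContinuousAt h 0) (hg₀ : g 0 ≠ 0) (hh₀ : h 0 ≠ 0)
    (heq : ∀ᶠ y in 𝓝 0, y ^ k * g y = y ^ l * h y) : k = l := by
  wlog hkl : k ≤ l generalizing k l g h
  · exact (this hh hg hh₀ hg₀ (heq.mono fun _ ↦ Eq.symm) (not_le.1 hkl).le).symm
  by_contra hne
  obtain ⟨m, rfl⟩ := Nat.exists_eq_add_of_le hkl
  have hcancel : ∀ᶠ y in 𝓝[≠] 0, g y = y ^ m * h y := by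
    filter_upwards [nhdsWithin_le_nhds heq, self_mem_nhdsWithin] with y hy hy0
    exact mul_left_cancel₀ (pow_ne_zero k hy0) (by rw [hy, pow_add, mul_assoc])
  have hlim : g 0 = 0 ^ m * h 0 := tendsto_nhds_unique
    (hg.tendsto.mono_left nhdsWithin_le_nhds |>.congr' hcancel)
    (((continuousAt_id.pow m).mul hh).tendsto.mono_left nhdsWithin_le_nhds)
  exact hg₀ (by rw [hlim, zero_pow (by lia), zero_mul])

namespace BoundedCoeffs

theorem exists_eq_shift_pow {a : BoundedCoeffs 𝕜} (ha : a ≠ 0) :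
    ∃ (k : ℕ) (u : BoundedCoeffs 𝕜), a = (shift ^ k) u ∧ u 0 ≠ 0 := by
  classical
  have hex : ∃ n, a n ≠ 0 := by
    contrapose! ha
    ext n
    exact ha n
  obtain ⟨u, hu, hcoeff⟩ := exists_shift_pow_eq (a := a) (k := Nat.find hex) fun j hj ↦ by
    simpa using Nat.find_min hex hj
  exact ⟨_, u, hu.symm, by simpa [hcoeff] using Nat.find_spec hex⟩

theorem continuousAt_eval_apply (u : BoundedCoeffs 𝕜) : ContinuousAt (fun η ↦ eval η u) 0 :=
  continuousAt_eval_zero.clm_apply continuousAt_const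

theorem exists_eq_shift_pow_of_eval_eq {a : BoundedCoeffs 𝕜} {k : ℕ} {w : 𝕜 → 𝕜}
    (hw : ContinuousAt w 0) (hw₀ : w 0 ≠ 0) (haw : ∀ᶠ η in 𝓝 0, eval η a = η ^ k * w η) :
    ∃ u : BoundedCoeffs 𝕜, a = (shift ^ k) u ∧ u 0 ≠ 0 := by
  have ha : a ≠ 0 := by
    rintro rfl
    have hne : ∀ᶠ _ in 𝓝[≠] (0 : 𝕜), False := by
      filter_upwards [nhdsWithin_le_nhds haw, nhdsWithin_le_nhds (hw.eventually_ne hw₀),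
        self_mem_nhdsWithin] with η hη hwη hη₀
      exact mul_ne_zero (pow_ne_zero k hη₀) hwη (by rw [← hη, map_zero])
    exact hne.exists.choose_spec
  obtain ⟨l, u, hau, hu⟩ := exists_eq_shift_pow ha
  have hlk : l = k := by
    refine eq_of_pow_mul_eventuallyEq (continuousAt_eval_apply u) hw (by rwa [eval_zero]) hw₀ ?_
    filter_upwards [haw, Metric.ball_mem_nhds (0 : 𝕜) one_pos] with η hη hη₁
    rw [← hη, hau, eval_shift_pow l u (mem_ball_zero_iff.1 hη₁)]
  exact ⟨u, hlk ▸ hau, hu⟩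

theorem eval_monicMul (k : ℕ) (u : BoundedCoeffs 𝕜) (c : Fin k → 𝕜) {η : 𝕜} (hη : ‖η‖ < 1) :
    eval η (monicMul k (u, c)) = (η ^ k + ∑ j, c j * η ^ (j : ℕ)) * eval η u := by
  simp only [monicMul, map_add, map_sum, map_smul, eval_shift_pow _ _ hη, smul_eq_mul, add_mul,
    Finset.sum_mul, mul_assoc]

theorem exists_eventually_eq_monic_mul {f : V × 𝕜 → 𝕜} (hf : AnalyticAt 𝕜 f 0) {k : ℕ}
    {w : 𝕜 → 𝕜} (hw : ContinuousAt w 0) (hw₀ : w 0 ≠ 0)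
    (hfw : ∀ᶠ y in 𝓝 0, f (0, y) = y ^ k * w y) :
    ∃ ρ : 𝕜, ρ ≠ 0 ∧ ∃ (c : Fin k → analyticSubring 𝕜 V) (v : V × 𝕜 → 𝕜),
      (∀ j, (c j : V → 𝕜) 0 = 0) ∧ ContinuousAt v 0 ∧ v 0 ≠ 0 ∧ ∀ᶠ p in 𝓝 (0 : V × 𝕜),
        f (p.1, p.2 * ρ) = (p.2 ^ k + ∑ j, (c j : V → 𝕜) p.1 * p.2 ^ (j : ℕ)) * v p := by
  obtain ⟨ρ, hρ, a, ha, haf⟩ := exists_analyticAt_eval_eq hf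
  have hρ₀ : (ρ : 𝕜) ≠ 0 := by exact_mod_cast hρ.ne'
  have hscale : Tendsto (fun η : 𝕜 ↦ η * (ρ : 𝕜)) (𝓝 0) (𝓝 0) :=
    Continuous.tendsto' (by fun_prop) _ _ (zero_mul _)
  obtain ⟨u₀, hau₀, hu₀⟩ : ∃ u : BoundedCoeffs 𝕜, a 0 = (shift ^ k) u ∧ u 0 ≠ 0 := by
    refine exists_eq_shift_pow_of_eval_eq (w := fun η ↦ (ρ : 𝕜) ^ k * w (η * ρ)) ?_ ?_ ?_
    · exact continuousAt_const.mul (hw.comp_of_eq (by fun_prop) (zero_mul _))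
    · simpa [hρ₀] using hw₀
    · filter_upwards [hscale.eventually hfw, Metric.ball_mem_nhds (0 : 𝕜) one_pos] with η hη hη₁
      rw [haf 0 (by simpa) η (mem_ball_zero_iff.1 hη₁), hη]
      ring
  obtain ⟨u, c, hu, hc, rfl, hc₀, hauc⟩ := exists_eventually_eq_monicMul ha hu₀ hau₀
  refine ⟨ρ, hρ₀, fun j ↦ ⟨fun x ↦ c x j, analyticAt_pi_iff.1 hc j⟩, fun p ↦ eval p.2 (u p.1),
    fun j ↦ congrFun hc₀ j, ?_, (eval_zero (u 0)).trans_ne hu₀, ?_⟩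
  · exact ContinuousAt.clm_apply (continuousAt_eval_zero.comp_of_eq continuousAt_snd rfl)
      (hu.comp_of_eq continuousAt_fst rfl)
  · have hfst : Tendsto (Prod.fst : V × 𝕜 → V) (𝓝 0) (𝓝 0) := continuous_fst.tendsto' _ _ rfl
    have hsnd : Tendsto (Prod.snd : V × 𝕜 → 𝕜) (𝓝 0) (𝓝 0) := continuous_snd.tendsto' _ _ rfl
    filter_upwards [hfst.eventually hauc, hfst.eventually (Metric.ball_mem_nhds 0 hρ),
      hsnd.eventually (Metric.ball_mem_nhds 0 one_pos)] with p hap hx hη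
    rw [← haf _ (mem_ball_zero_iff.1 hx) _ (mem_ball_zero_iff.1 hη), hap,
      eval_monicMul _ _ _ (mem_ball_zero_iff.1 hη)]

end BoundedCoeffs

/-- The analytic family of monic polynomials of degree `k` with lower coefficients `c`. -/
noncomputable def monicFamily {k : ℕ} (c : Fin k → analyticSubring 𝕜 V) :
    (analyticSubring 𝕜 V)[X] :=
  X ^ k + ∑ j, C (c j) * X ^ (j : ℕ)

theorem monic_monicFamily {k : ℕ} (c : Fin k → analyticSubring 𝕜 V) : (monicFamily c).Monic :=
  monic_X_pow_add (degree_sum_fin_lt c)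

theorem coeff_monicFamily {k : ℕ} (c : Fin k → analyticSubring 𝕜 V) (j : Fin k) :
    (monicFamily c).coeff j = c j := by
  simp [monicFamily, coeff_X_pow, j.2.ne, coeff_C_mul, Fin.val_inj]

theorem natDegree_monicFamily {k : ℕ} (c : Fin k → analyticSubring 𝕜 V) :
    (monicFamily c).natDegree = k := by
  rw [monicFamily, natDegree_add_eq_left_of_degree_lt, natDegree_X_pow]
  simpa using degree_sum_fin_lt c

theorem monicFamily_coeff {P : (analyticSubring 𝕜 V)[X]} (hP : P.Monic) :
    monicFamily (fun j : Fin P.natDegree ↦ P.coeff j) = P := by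
  rw [monicFamily, Fin.sum_univ_eq_sum_range fun j ↦ C (P.coeff j) * X ^ j, ← hP.as_sum]

theorem eval_specialize_monicFamily {k : ℕ} (c : Fin k → analyticSubring 𝕜 V) (x : V) (y : 𝕜) :
    (specialize x (monicFamily c)).eval y = y ^ k + ∑ j, (c j : V → 𝕜) x * y ^ (j : ℕ) := by
  simp only [monicFamily, map_add, map_pow, map_sum, map_mul, specialize_C, specialize_X, eval_add,
    eval_pow, eval_X, eval_finsetSum, eval_mul, eval_C]

theorem weighted_homogeneous_pow_add_sum {R : Type*} [CommRing R] {k : ℕ} (c : Fin k → R)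
    (ρ y : R) : (ρ * y) ^ k + ∑ j : Fin k, ρ ^ (k - j : ℕ) * c j * (ρ * y) ^ (j : ℕ) =
      ρ ^ k * (y ^ k + ∑ j, c j * y ^ (j : ℕ)) := by
  rw [mul_add, mul_pow, Finset.mul_sum]
  congr 1
  refine Finset.sum_congr rfl fun j _ ↦ ?_
  rw [← pow_sub_mul_pow ρ j.2.le]
  ring

/-- Weierstrass preparation, as far as zero sets are concerned. -/
theorem exists_monic_eq_zero_iff {f : V × 𝕜 → 𝕜} (hf : AnalyticAt 𝕜 f 0) {k : ℕ} {w : 𝕜 → 𝕜}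
    (hw : ContinuousAt w 0) (hw₀ : w 0 ≠ 0) (hfw : ∀ᶠ y in 𝓝 0, f (0, y) = y ^ k * w y) :
    ∃ P : (analyticSubring 𝕜 V)[X], P.Monic ∧ specialize 0 P = X ^ k ∧
      ∀ᶠ p in 𝓝 (0 : V × 𝕜), f p = 0 ↔ (specialize p.1 P).eval p.2 = 0 := by
  obtain ⟨ρ, hρ, c, v, hc₀, hv, hv₀, hfac⟩ :=
    BoundedCoeffs.exists_eventually_eq_monic_mul hf hw hw₀ hfw
  refine ⟨monicFamily fun j ↦ ⟨fun _ ↦ ρ ^ (k - j : ℕ), analyticAt_const⟩ * c j,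
    monic_monicFamily _, by simp [monicFamily, specialize_C, specialize_X, hc₀], ?_⟩
  have hdiv : Tendsto (fun p : V × 𝕜 ↦ (p.1, p.2 / ρ)) (𝓝 0) (𝓝 0) :=
    Continuous.tendsto' (by fun_prop) _ _ (by simp)
  filter_upwards [hdiv.eventually hfac, hdiv.eventually (hv.eventually_ne hv₀)] with p hp hvp
  have hscale := weighted_homogeneous_pow_add_sum (fun j ↦ (c j : V → 𝕜) p.1) ρ (p.2 / ρ)
  rw [mul_div_cancel₀ _ hρ] at hscale
  rw [div_mul_cancel₀ _ hρ] at hp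
  rw [hp, eval_specialize_monicFamily, mul_eq_zero_iff_right hvp]
  exact (mul_eq_zero_iff_left (pow_ne_zero k hρ)).symm.trans (Eq.congr_left hscale.symm)

theorem exists_monic_eq_zero_iff_of_line {f : V × 𝕜 → 𝕜} (hf : AnalyticAt 𝕜 f 0)
    (hline : ¬∀ᶠ y in 𝓝 0, f (0, y) = 0) :
    ∃ (P : (analyticSubring 𝕜 V)[X]) (k : ℕ), P.Monic ∧ specialize 0 P = X ^ k ∧
      ∀ᶠ p in 𝓝 (0 : V × 𝕜), f p = 0 ↔ (specialize p.1 P).eval p.2 = 0 := by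
  have hfline : AnalyticAt 𝕜 (fun y ↦ f (0, y)) 0 :=
    hf.fun_comp_of_eq (analyticAt_const.prod analyticAt_id) rfl
  obtain ⟨k, w, hw, hw₀, hfw⟩ := hfline.exists_eventuallyEq_pow_smul_nonzero_iff.2 hline
  obtain ⟨P, hP, hP₀, hfP⟩ := exists_monic_eq_zero_iff hf hw.continuousAt hw₀ <| by
    simpa only [sub_zero, smul_eq_mul] using hfw
  exact ⟨P, k, hP, hP₀, hfP⟩

end WeierstrassPreparation

section AnalyticBranches

/-- The sets `Z s`, for small `s > 0`, are covered by finitely many analytic branches after a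
substitution `s ↦ s ^ N`. -/
def HasPuiseuxBranches (Z : ℝ → Set ℝ) : Prop :=
  ∃ N ≠ 0, ∃ T : Set (ℝ → ℝ), T.Finite ∧ (∀ ζ ∈ T, AnalyticAt ℝ ζ 0) ∧
    ∀ᶠ s in 𝓝[>] 0, ∀ y ∈ Z (s ^ N), ∃ ζ ∈ T, y = ζ s

theorem tendsto_pow_nhdsGT_zero {N : ℕ} (hN : N ≠ 0) :
    Tendsto (fun s : ℝ ↦ s ^ N) (𝓝[>] 0) (𝓝[>] 0) :=
  tendsto_nhdsWithin_iff.2 ⟨((continuous_pow N).tendsto' _ _ (zero_pow hN)).mono_left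
    nhdsWithin_le_nhds, eventually_mem_nhdsWithin.mono fun _ hs ↦ pow_pos (Set.mem_Ioi.1 hs) N⟩

theorem analyticAt_comp_pow {a : ℝ → ℝ} (ha : AnalyticAt ℝ a 0) {N : ℕ} (hN : N ≠ 0) :
    AnalyticAt ℝ (fun s ↦ a (s ^ N)) 0 :=
  ha.fun_comp_of_eq (analyticAt_id.pow N) (zero_pow hN)

namespace HasPuiseuxBranches

variable {Z Z' : ℝ → Set ℝ}

theorem mono (h : HasPuiseuxBranches Z') (hZ : ∀ᶠ s in 𝓝[>] 0, Z s ⊆ Z' s) :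
    HasPuiseuxBranches Z := by
  obtain ⟨N, hN, T, hT, hTa, hcover⟩ := h
  refine ⟨N, hN, T, hT, hTa, ?_⟩
  filter_upwards [hcover, (tendsto_pow_nhdsGT_zero hN).eventually hZ] with s hs hsub y hy
  exact hs y (hsub hy)

theorem of_pow {q : ℕ} (hq : q ≠ 0) (h : HasPuiseuxBranches fun s ↦ Z (s ^ q)) :
    HasPuiseuxBranches Z := by
  obtain ⟨N, hN, T, hT, hTa, hcover⟩ := h
  exact ⟨N * q, mul_ne_zero hN hq, T, hT, hTa, by simpa only [pow_mul] using hcover⟩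

theorem singleton {a : ℝ → ℝ} (ha : AnalyticAt ℝ a 0) : HasPuiseuxBranches fun s ↦ {a s} :=
  ⟨1, one_ne_zero, {a}, Set.finite_singleton a, by simpa using ha, by simp⟩

theorem empty : HasPuiseuxBranches fun _ ↦ ∅ :=
  ⟨1, one_ne_zero, ∅, Set.finite_empty, by simp, by simp⟩

theorem comp_pow {N q : ℕ} (hq : q ≠ 0) {T : Set (ℝ → ℝ)}
    (hcover : ∀ᶠ s in 𝓝[>] 0, ∀ y ∈ Z (s ^ N), ∃ ζ ∈ T, y = ζ s) :
    ∀ᶠ s in 𝓝[>] 0, ∀ y ∈ Z (s ^ (q * N)), ∃ ζ ∈ (fun ζ s ↦ ζ (s ^ q)) '' T, y = ζ s := by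
  filter_upwards [(tendsto_pow_nhdsGT_zero hq).eventually hcover] with s hs y hy
  obtain ⟨ζ, hζ, rfl⟩ := hs y (by rwa [← pow_mul])
  exact ⟨_, Set.mem_image_of_mem _ hζ, rfl⟩

theorem union (h : HasPuiseuxBranches Z) (h' : HasPuiseuxBranches Z') :
    HasPuiseuxBranches fun s ↦ Z s ∪ Z' s := by
  obtain ⟨N, hN, T, hT, hTa, hcover⟩ := h
  obtain ⟨N', hN', T', hT', hTa', hcover'⟩ := h'
  refine ⟨N' * N, mul_ne_zero hN' hN,
    (fun ζ s ↦ ζ (s ^ N')) '' T ∪ (fun ζ s ↦ ζ (s ^ N)) '' T',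
    (hT.image _).union (hT'.image _), ?_, ?_⟩
  · rintro _ (⟨ζ, hζ, rfl⟩ | ⟨ζ, hζ, rfl⟩)
    exacts [analyticAt_comp_pow (hTa ζ hζ) hN', analyticAt_comp_pow (hTa' ζ hζ) hN]
  · have hcomm := comp_pow hN hcover'
    rw [mul_comm] at hcomm
    filter_upwards [comp_pow hN' hcover, hcomm] with s hs hs' y hy
    exact hy.elim (fun hy ↦ (hs y hy).imp fun ζ hζ ↦ ⟨.inl hζ.1, hζ.2⟩)
      fun hy ↦ (hs' y hy).imp fun ζ hζ ↦ ⟨.inr hζ.1, hζ.2⟩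

theorem biUnion {ι : Type*} {I : Set ι} (hI : I.Finite) {Z : ι → ℝ → Set ℝ}
    (h : ∀ i ∈ I, HasPuiseuxBranches (Z i)) : HasPuiseuxBranches fun s ↦ ⋃ i ∈ I, Z i s := by
  induction I, hI using Set.Finite.induction_on with
  | empty => simpa using empty
  | insert _ _ ih =>
    simp only [Set.biUnion_insert]
    exact (h _ (Set.mem_insert _ _)).union (ih fun i hi ↦ h i (Set.mem_insert_of_mem _ hi))

theorem affine_image (h : HasPuiseuxBranches Z) {a b : ℝ → ℝ} (ha : AnalyticAt ℝ a 0)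
    (hb : AnalyticAt ℝ b 0) : HasPuiseuxBranches fun s ↦ (fun y ↦ a s + b s * y) '' Z s := by
  obtain ⟨N, hN, T, hT, hTa, hcover⟩ := h
  refine ⟨N, hN, (fun ζ s ↦ a (s ^ N) + b (s ^ N) * ζ s) '' T, hT.image _, ?_, ?_⟩
  · rintro _ ⟨ζ, hζ, rfl⟩
    exact (analyticAt_comp_pow ha hN).add ((analyticAt_comp_pow hb hN).mul (hTa ζ hζ))
  · filter_upwards [hcover] with s hs
    rintro _ ⟨y, hy, rfl⟩
    obtain ⟨ζ, hζ, rfl⟩ := hs y hy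
    exact ⟨_, Set.mem_image_of_mem _ hζ, rfl⟩

end HasPuiseuxBranches

end AnalyticBranches

section RootsNearby

variable {𝕜 V : Type*} [RCLike 𝕜] [NormedAddCommGroup V] [NormedSpace 𝕜 V]

theorem natDegree_specialize {P : (analyticSubring 𝕜 V)[X]} (hP : P.Monic) (x : V) :
    (specialize x P).natDegree = P.natDegree :=
  hP.natDegree_map _

theorem monic_specialize {P : (analyticSubring 𝕜 V)[X]} (hP : P.Monic) (x : V) :
    (specialize x P).Monic :=
  hP.map _

theorem exists_monic_near_root {P : (analyticSubring 𝕜 V)[X]} (hP : P.Monic) (c : 𝕜) :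
    ∃ Q : (analyticSubring 𝕜 V)[X], Q.Monic ∧
      Q.natDegree = (specialize 0 P).rootMultiplicity c ∧
      ∀ᶠ p in 𝓝 ((0 : V), c), (specialize p.1 P).eval p.2 = 0 ↔
        (specialize p.1 Q).eval (p.2 - c) = 0 := by
  obtain ⟨w, hw, hcw⟩ := (specialize 0 P).exists_eq_pow_rootMultiplicity_mul_and_not_dvd
    (monic_specialize hP 0).ne_zero c
  have hf : AnalyticAt 𝕜 (fun p : V × 𝕜 ↦ (specialize p.1 P).eval (p.2 + c)) 0 :=
    (analyticAt_eval_specialize P c).fun_comp_of_eq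
      (analyticAt_fst.prod (analyticAt_snd.add analyticAt_const)) (by simp)
  obtain ⟨Q, hQ, hQ₀, hPQ⟩ := exists_monic_eq_zero_iff hf (w := fun y ↦ w.eval (y + c))
    (by fun_prop) (by simpa [dvd_iff_isRoot] using hcw) (.of_forall fun y ↦ by
      simpa using congrArg (eval (y + c)) hw)
  refine ⟨Q, hQ, by rw [← natDegree_specialize hQ 0, hQ₀, natDegree_X_pow], ?_⟩
  have hshift : Tendsto (fun p : V × 𝕜 ↦ (p.1, p.2 - c)) (𝓝 (0, c)) (𝓝 0) :=
    Continuous.tendsto' (by fun_prop) _ _ (by simp)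
  simpa using hshift.eventually hPQ

theorem continuousAt_cauchyBound_specialize {P : (analyticSubring 𝕜 V)[X]} (hP : P.Monic) :
    ContinuousAt (fun x ↦ cauchyBound (specialize x P)) 0 := by
  simp only [cauchyBound, natDegree_specialize hP, (monic_specialize hP _).leadingCoeff,
    coeff_specialize]
  have hsup : ContinuousAt (fun x ↦ (Finset.range P.natDegree).sup
      fun n ↦ ‖(P.coeff n : V → 𝕜) x‖₊) 0 :=
    Tendsto.finset_sup_nhds_apply fun n _ ↦ (P.coeff n).2.continuousAt.nnnorm
  exact (hsup.div_const _).add continuousAt_const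

theorem exists_eventually_norm_root_le {P : (analyticSubring 𝕜 V)[X]} (hP : P.Monic) :
    ∃ B : ℝ, ∀ᶠ x in 𝓝 (0 : V), ∀ y, (specialize x P).eval y = 0 → ‖y‖ ≤ B := by
  refine ⟨cauchyBound (specialize 0 P) + 1, ?_⟩
  filter_upwards [(continuousAt_cauchyBound_specialize hP).eventually_lt_const (lt_add_one _)]
    with x hx y hy
  exact (IsRoot.norm_lt_cauchyBound (monic_specialize hP x).ne_zero hy).le.trans
    (by exact_mod_cast hx.le)

theorem eventually_forall_root_of_forall_root {P : (analyticSubring 𝕜 V)[X]} (hP : P.Monic)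
    {p : V → 𝕜 → Prop}
    (hp : ∀ c, (specialize 0 P).eval c = 0 → ∀ᶠ q in 𝓝 ((0 : V), c),
      (specialize q.1 P).eval q.2 = 0 → p q.1 q.2) :
    ∀ᶠ x in 𝓝 (0 : V), ∀ y, (specialize x P).eval y = 0 → p x y := by
  obtain ⟨B, hB⟩ := exists_eventually_norm_root_le hP
  have hnear : ∀ᶠ x in 𝓝 (0 : V), ∀ y ∈ Metric.closedBall (0 : 𝕜) B,
      (specialize x P).eval y = 0 → p x y := by
    refine (isCompact_closedBall 0 B).eventually_forall_of_forall_eventually fun c _ ↦ ?_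
    by_cases hc : (specialize 0 P).eval c = 0
    · exact hp c hc
    · filter_upwards [(analyticAt_eval_specialize P c).continuousAt.eventually_ne hc] with q hq h
      exact absurd h hq
  filter_upwards [hB, hnear] with x hxB hx y hy
  exact hx y (mem_closedBall_zero_iff.2 (hxB y hy)) hy

end RootsNearby

section Puiseux

/-- The set of zeros at each parameter of an analytic family of polynomials. -/
def zeroSet (P : (analyticSubring ℝ ℝ)[X]) (s : ℝ) : Set ℝ := {y | (specialize s P).eval y = 0}

theorem hasPuiseuxBranches_zeroSet_of_near_roots {P : (analyticSubring ℝ ℝ)[X]} (hP : P.Monic)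
    (ih : ∀ Q : (analyticSubring ℝ ℝ)[X], Q.Monic → ∀ c ∈ zeroSet P 0,
      Q.natDegree = (specialize 0 P).rootMultiplicity c → HasPuiseuxBranches (zeroSet Q)) :
    HasPuiseuxBranches (zeroSet P) := by
  choose Q hQ hdeg hPQ using exists_monic_near_root hP
  have hfin : (zeroSet P 0).Finite :=
    ((specialize 0 P).roots.toFinset.finite_toSet).subset fun c hc ↦ by
      simpa [(monic_specialize hP 0).ne_zero] using Set.mem_ofPred.1 hc
  refine (HasPuiseuxBranches.biUnion hfin fun c hc ↦
    (ih (Q c) (hQ c) c hc (hdeg c)).affine_image (a := fun _ ↦ c) (b := fun _ ↦ 1)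
      analyticAt_const analyticAt_const).mono (nhdsWithin_le_nhds ?_)
  refine eventually_forall_root_of_forall_root hP fun c hc ↦ (hPQ c).mono fun q hq hPq ↦ ?_
  exact Set.mem_biUnion hc ⟨q.2 - c, hq.1 hPq, by simp⟩

theorem coeff_taylor_natDegree_sub_one {R : Type*} [CommRing R] {P : R[X]} (hP : P.Monic)
    (hd : P.natDegree ≠ 0) (r : R) :
    (taylor r P).coeff (P.natDegree - 1) = P.coeff (P.natDegree - 1) + P.natDegree * r := by
  have hsub : P.natDegree - (P.natDegree - 1) < 2 := by lia
  rw [taylor_coeff, eval_eq_sum_range' ((natDegree_hasseDeriv_le P _).trans_lt hsub)]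
  have hsucc : 1 + (P.natDegree - 1) = P.natDegree := by lia
  have hcoeff : P.coeff P.natDegree = 1 := hP
  simp [Finset.sum_range_succ, hasseDeriv_coeff, hsucc, hcoeff,
    Nat.choose_symm (Nat.one_le_iff_ne_zero.2 hd)]

/-- The Newton polygon of `Y ^ d + ∑ j, c j * Y ^ j`: the substitution `s = t ^ q`, `Y = t ^ p * η`,
where `p / q` is the smallest slope, makes some lower coefficient nonzero at `t = 0`. -/
theorem exists_newton_slope {d : ℕ} {c : Fin d → ℝ → ℝ} (hc : ∀ j, AnalyticAt ℝ (c j) 0)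
    (hc₀ : ∃ j, ¬ ∀ᶠ s in 𝓝 0, c j s = 0) :
    ∃ (p q : ℕ) (b : Fin d → ℝ → ℝ), q ≠ 0 ∧ (∀ j, AnalyticAt ℝ (b j) 0) ∧ (∃ j, b j 0 ≠ 0) ∧
      ∀ j, ∀ᶠ t in 𝓝 0, c j (t ^ q) = t ^ (p * (d - j)) * b j t := by
  classical
  have horder (j : Fin d) (hj : ¬ ∀ᶠ s in 𝓝 0, c j s = 0) : ∃ (v : ℕ) (w : ℝ → ℝ),
      AnalyticAt ℝ w 0 ∧ w 0 ≠ 0 ∧ ∀ᶠ s in 𝓝 0, c j s = s ^ v * w s := by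
    simpa using (hc j).exists_eventuallyEq_pow_smul_nonzero_iff.2 hj
  choose! v w hw hw₀ hcw using horder
  obtain ⟨i, hi, hmin⟩ := Finset.exists_min_image
    {j : Fin d | ¬ ∀ᶠ s in 𝓝 0, c j s = 0} (fun j ↦ (v j : ℚ) / (d - j : ℕ))
    (by simpa [Finset.Nonempty] using hc₀)
  simp only [Finset.mem_filter_univ] at hi hmin
  have hq : d - (i : ℕ) ≠ 0 := by lia
  have htend : Tendsto (fun t : ℝ ↦ t ^ (d - i : ℕ)) (𝓝 0) (𝓝 0) :=
    (continuous_pow _).tendsto' _ _ (zero_pow hq)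
  refine ⟨v i, d - i, fun j ↦ if ∀ᶠ s in 𝓝 0, c j s = 0 then 0 else
    fun t ↦ t ^ (v j * (d - i) - v i * (d - j)) * w j (t ^ (d - i : ℕ)), hq, fun j ↦ ?_,
    ⟨i, by simpa [hi, hq] using hw₀ i hi⟩, fun j ↦ ?_⟩
  · dsimp only
    split_ifs with hj
    · exact analyticAt_const
    · exact (analyticAt_id.pow _).mul (analyticAt_comp_pow (hw j hj) hq)
  · dsimp only
    split_ifs with hj
    · simpa using htend.eventually hj
    · have hle : v i * (d - j) ≤ v j * (d - i) := by
        have := hmin j hj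
        rw [div_le_div_iff₀ (by simp) (by simp)] at this
        exact_mod_cast this
      filter_upwards [htend.eventually (hcw j hj)] with t ht
      rw [ht, ← mul_assoc, ← pow_add, Nat.add_sub_cancel' hle, ← pow_mul, mul_comm (v j)]

theorem rootMultiplicity_lt_natDegree {K : Type*} [Field K] [CharZero K] {p : K[X]} (hp : p.Monic)
    (hnext : p.nextCoeff = 0) (hpX : p ≠ X ^ p.natDegree) (hd : p.natDegree ≠ 0) (c : K) :
    p.rootMultiplicity c < p.natDegree := by
  by_contra! hle
  have hpow : p = (X - C c) ^ p.natDegree := by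
    refine eq_of_monic_of_dvd_of_natDegree_le ((monic_X_sub_C c).pow _) hp ?_
      (by rw [natDegree_pow, natDegree_X_sub_C, mul_one])
    exact (pow_dvd_pow _ hle).trans (p.pow_rootMultiplicity_dvd c)
  have hc : c = 0 := by
    rw [hpow, (monic_X_sub_C c).nextCoeff_pow, nextCoeff_X_sub_C] at hnext
    simpa [hd] using hnext
  exact hpX (by simpa [hc] using hpow)

theorem exists_newton_transform {P : (analyticSubring ℝ ℝ)[X]} (hP : P.Monic)
    (hlow : ∃ j : Fin P.natDegree, ¬ ∀ᶠ s in 𝓝 0, (P.coeff j : ℝ → ℝ) s = 0) :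
    ∃ (p q : ℕ) (Q : (analyticSubring ℝ ℝ)[X]), q ≠ 0 ∧ Q.Monic ∧ Q.natDegree = P.natDegree ∧
      (∃ j : Fin P.natDegree, (specialize 0 Q).coeff j ≠ 0) ∧
      (∀ j : Fin P.natDegree, (∀ᶠ s in 𝓝 0, (P.coeff j : ℝ → ℝ) s = 0) →
        (specialize 0 Q).coeff j = 0) ∧
      ∀ᶠ t in 𝓝[>] 0, zeroSet P (t ^ q) ⊆ (fun η ↦ t ^ p * η) '' zeroSet Q t := by
  obtain ⟨p, q, b, hq, hb, hb₀, hcb⟩ := exists_newton_slope (fun j ↦ (P.coeff j).2) hlow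
  have hcb' : ∀ᶠ t in 𝓝[>] 0, ∀ j : Fin P.natDegree,
      (P.coeff j : ℝ → ℝ) (t ^ q) = t ^ (p * (P.natDegree - j)) * b j t :=
    nhdsWithin_le_nhds (eventually_all.2 hcb)
  refine ⟨p, q, monicFamily fun j ↦ ⟨b j, hb j⟩, hq, monic_monicFamily _, natDegree_monicFamily _,
    by simpa [coeff_specialize, coeff_monicFamily] using hb₀, fun j hj ↦ ?_, ?_⟩
  · have hbj : Tendsto (b j) (𝓝[>] 0) (𝓝 0) := by
      refine tendsto_const_nhds.congr' ?_
      filter_upwards [hcb', (tendsto_pow_nhdsGT_zero hq).eventually (nhdsWithin_le_nhds hj),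
        self_mem_nhdsWithin] with t ht hzero htpos
      rw [ht, mul_eq_zero_iff_left (pow_ne_zero _ htpos.ne')] at hzero
      exact hzero.symm
    simpa [coeff_specialize, coeff_monicFamily] using
      tendsto_nhds_unique ((hb j).continuousAt.tendsto.mono_left nhdsWithin_le_nhds) hbj
  · filter_upwards [hcb', self_mem_nhdsWithin] with t ht htpos y hy
    have hρ : t ^ p ≠ 0 := pow_ne_zero p htpos.ne'
    refine ⟨y / t ^ p, ?_, mul_div_cancel₀ y hρ⟩
    have hscale := weighted_homogeneous_pow_add_sum (fun j ↦ b j t) (t ^ p) (y / t ^ p)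
    rw [zeroSet, Set.mem_ofPred, ← monicFamily_coeff hP, eval_specialize_monicFamily] at hy
    simp only [mul_div_cancel₀ y hρ, ← pow_mul, ← ht, hy] at hscale
    rw [zeroSet, Set.mem_ofPred, eval_specialize_monicFamily]
    exact (mul_eq_zero_iff_left (pow_ne_zero _ htpos.ne')).1 hscale.symm

theorem exists_zeroSet_eq_add_image {P : (analyticSubring ℝ ℝ)[X]} (hP : P.Monic)
    (hd : P.natDegree ≠ 0) :
    ∃ (Q : (analyticSubring ℝ ℝ)[X]) (r : analyticSubring ℝ ℝ), Q.Monic ∧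
      Q.natDegree = P.natDegree ∧ Q.coeff (P.natDegree - 1) = 0 ∧
      ∀ s, zeroSet P s = (fun y ↦ (r : ℝ → ℝ) s + y) '' zeroSet Q s := by
  let κ : analyticSubring ℝ ℝ := ⟨fun _ ↦ -(P.natDegree : ℝ)⁻¹, analyticAt_const⟩
  have hκ : (P.natDegree : analyticSubring ℝ ℝ) * κ = -1 := by
    ext s
    simp [κ, hd]
  refine ⟨taylor (κ * P.coeff (P.natDegree - 1)) P, κ * P.coeff (P.natDegree - 1),
    (leadingCoeff_taylor _ _).trans hP, natDegree_taylor _ _, ?_, fun s ↦ ?_⟩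
  · rw [coeff_taylor_natDegree_sub_one hP hd, ← mul_assoc, hκ]
    ring
  · ext y
    simp only [zeroSet, specialize, coe_mapRingHom, map_taylor]
    simp [taylor_eval, evalAt_apply]

theorem hasPuiseuxBranches_zeroSet_of_coeff_eq_zero {P : (analyticSubring ℝ ℝ)[X]} (hP : P.Monic)
    (hd : P.natDegree ≠ 0) (hnext : P.coeff (P.natDegree - 1) = 0)
    (ih : ∀ Q : (analyticSubring ℝ ℝ)[X], Q.Monic → Q.natDegree < P.natDegree →
      HasPuiseuxBranches (zeroSet Q)) : HasPuiseuxBranches (zeroSet P) := by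
  by_cases hlow : ∃ j : Fin P.natDegree, ¬ ∀ᶠ s in 𝓝 0, (P.coeff j : ℝ → ℝ) s = 0
  · obtain ⟨p, q, Q, hq, hQ, hQd, ⟨j, hj⟩, hQ₀, hPQ⟩ := exists_newton_transform hP hlow
    have hQn : (specialize 0 Q).natDegree = P.natDegree := (natDegree_specialize hQ 0).trans hQd
    have hQnext : (specialize 0 Q).nextCoeff = 0 := by
      rw [nextCoeff_of_natDegree_pos (by lia), hQn]
      exact hQ₀ ⟨P.natDegree - 1, by lia⟩ (.of_forall fun s ↦ by simp [hnext])
    have hQX : specialize 0 Q ≠ X ^ (specialize 0 Q).natDegree := by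
      intro hX
      rw [hX, hQn, coeff_X_pow, if_neg j.2.ne] at hj
      exact hj rfl
    have hQZ : HasPuiseuxBranches (zeroSet Q) :=
      hasPuiseuxBranches_zeroSet_of_near_roots hQ fun R hR c _ hRc ↦ ih R hR <| by
        rw [hRc, ← hQn]
        exact rootMultiplicity_lt_natDegree (monic_specialize hQ 0) hQnext hQX (by lia) c
    refine ((hQZ.affine_image (a := fun _ ↦ 0) analyticAt_const (analyticAt_id.pow p)).mono
      ?_).of_pow hq
    simpa using hPQ
  · push Not at hlow
    refine (HasPuiseuxBranches.singleton analyticAt_const (a := fun _ ↦ 0)).mono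
      (nhdsWithin_le_nhds ?_)
    filter_upwards [eventually_all.2 hlow] with s hs y hy
    rw [zeroSet, Set.mem_ofPred, ← monicFamily_coeff hP, eval_specialize_monicFamily] at hy
    simpa [hs, hd] using hy

theorem hasPuiseuxBranches_zeroSet {P : (analyticSubring ℝ ℝ)[X]} (hP : P.Monic) :
    HasPuiseuxBranches (zeroSet P) := by
  induction hn : P.natDegree using Nat.strong_induction_on generalizing P with
  | _ n ih =>
    subst hn
    by_cases hd : P.natDegree = 0
    · refine .mono .empty (.of_forall fun s y hy ↦ ?_)
      simp [zeroSet, hP.natDegree_eq_zero.1 hd] at hy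
    obtain ⟨Q, r, hQ, hQd, hnext, hPQ⟩ := exists_zeroSet_eq_add_image hP hd
    have hQ' := hasPuiseuxBranches_zeroSet_of_coeff_eq_zero hQ (by lia) (by rwa [hQd])
      fun R hR hlt ↦ ih _ (hQd ▸ hlt) hR rfl
    refine (hQ'.affine_image r.2 (b := fun _ ↦ 1) analyticAt_const).mono (.of_forall fun s ↦ ?_)
    simpa using (hPQ s).subset

end Puiseux

section SimpleRoots

variable {A L : Type*} (k : Type*) [CommRing A] [Field L] [Field k]

/-- The filter of neighbourhoods, in the constructible topology, of the kernel of `φ` among the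
kernels of homomorphisms to `k`: a basic set prescribes that finitely many elements of `ker φ` are
sent to zero and that one element outside of `ker φ` is not. -/
def homsNear (φ : A →+* L) : Filter (A →+* k) where
  sets := {S | ∃ K : Set A, K.Finite ∧ (∀ a ∈ K, φ a = 0) ∧ ∃ c, φ c ≠ 0 ∧
    ∀ ψ : A →+* k, (∀ a ∈ K, ψ a = 0) → ψ c ≠ 0 → ψ ∈ S}
  univ_sets := ⟨∅, Set.finite_empty, by simp, 1, by simp, by simp⟩
  sets_of_superset := by
    rintro S T ⟨K, hK, hφK, c, hc, hS⟩ hST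
    exact ⟨K, hK, hφK, c, hc, fun ψ hψ hψc ↦ hST (hS ψ hψ hψc)⟩
  inter_sets := by
    rintro S S' ⟨K, hK, hφK, c, hc, hS⟩ ⟨K', hK', hφK', c', hc', hS'⟩
    refine ⟨K ∪ K', hK.union hK', fun a ha ↦ ha.elim (hφK a) (hφK' a), c * c',
      by simp [hc, hc'], fun ψ hψ hψc ↦ ?_⟩
    rw [map_mul] at hψc
    exact ⟨hS ψ (fun a ha ↦ hψ a (.inl ha)) (left_ne_zero_of_mul hψc),
      hS' ψ (fun a ha ↦ hψ a (.inr ha)) (right_ne_zero_of_mul hψc)⟩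

variable {k} {φ : A →+* L}

theorem eventually_homsNear {p : (A →+* k) → Prop} :
    (∀ᶠ ψ in homsNear k φ, p ψ) ↔ ∃ K : Set A, K.Finite ∧ (∀ a ∈ K, φ a = 0) ∧ ∃ c, φ c ≠ 0 ∧
      ∀ ψ : A →+* k, (∀ a ∈ K, ψ a = 0) → ψ c ≠ 0 → p ψ :=
  Iff.rfl

theorem eventually_homsNear_ne_zero {c : A} (hc : φ c ≠ 0) : ∀ᶠ ψ in homsNear k φ, ψ c ≠ 0 :=
  eventually_homsNear.2 ⟨∅, Set.finite_empty, by simp, c, hc, fun _ _ hψ ↦ hψ⟩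

theorem eventually_homsNear_map_eq {p q : A[X]} (hpq : p.map φ = q.map φ) :
    ∀ᶠ ψ in homsNear k φ, p.map ψ = q.map ψ := by
  refine eventually_homsNear.2 ⟨Set.range (p - q).coeff, finite_range_coeff _, ?_, 1, by simp,
    fun ψ hψ _ ↦ ?_⟩
  · rintro _ ⟨n, rfl⟩
    rw [← coeff_map, Polynomial.map_sub, hpq, sub_self, coeff_zero]
  · ext n
    simpa [sub_eq_zero] using hψ _ ⟨n, rfl⟩

theorem homsNear_comp {F : Type*} [Field F] (κ : A →+* F) (ι : F →+* L) :
    homsNear k (ι.comp κ) = homsNear k κ :=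
  Filter.ext fun S ↦ by
    simp only [homsNear, RingHom.comp_apply, map_eq_zero, Filter.mem_mk, ne_eq]

section ClearDenominators

variable (hφ : ∀ x, ∃ a b, φ b ≠ 0 ∧ φ a / φ b = x)

include hφ

theorem exists_map_eq_C_mul (p : L[X]) : ∃ d, φ d ≠ 0 ∧ ∃ q : A[X], q.map φ = C (φ d) * p := by
  induction p using Polynomial.induction_on' with
  | add p p' hp hp' =>
    obtain ⟨d, hd, q, hq⟩ := hp
    obtain ⟨d', hd', q', hq'⟩ := hp'
    refine ⟨d * d', by simp [hd, hd'], C d' * q + C d * q', ?_⟩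
    simp only [Polynomial.map_add, Polynomial.map_mul, map_C, hq, hq', map_mul]
    ring
  | monomial n x =>
    obtain ⟨a, b, hb, rfl⟩ := hφ x
    exact ⟨b, hb, monomial n a, by simp [C_mul_monomial, mul_div_cancel₀, hb]⟩

theorem eventually_eval₂_eq_zero_of_dvd {q g : A[X]} (hqg : q.map φ ∣ g.map φ) :
    ∀ᶠ ψ in homsNear k φ, ∀ η, q.eval₂ ψ η = 0 → g.eval₂ ψ η = 0 := by
  obtain ⟨u, hu⟩ := hqg
  obtain ⟨c, hc, u', hu'⟩ := exists_map_eq_C_mul hφ u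
  have hmap : (C c * g).map φ = (u' * q).map φ := by
    simp only [Polynomial.map_mul, map_C, hu, hu']
    ring
  filter_upwards [eventually_homsNear_map_eq hmap, eventually_homsNear_ne_zero hc]
    with ψ hψ hψc η hη
  have heval := congrArg (eval η) hψ
  simp only [eval_map, eval₂_mul, eval₂_C, hη, mul_zero] at heval
  exact (mul_eq_zero_iff_left hψc).1 heval

theorem eventually_eval₂_ne_zero_of_isCoprime {q h : A[X]} (hqh : IsCoprime (q.map φ) (h.map φ)) :
    ∀ᶠ ψ in homsNear k φ, ∀ η, q.eval₂ ψ η = 0 → h.eval₂ ψ η ≠ 0 := by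
  obtain ⟨u, v, huv⟩ := hqh
  obtain ⟨d, hd, u', hu'⟩ := exists_map_eq_C_mul hφ u
  obtain ⟨e, he, v', hv'⟩ := exists_map_eq_C_mul hφ v
  have hmap : (C (d * e)).map φ = (C e * u' * q + C d * v' * h).map φ := by
    simp only [Polynomial.map_add, Polynomial.map_mul, map_C, hu', hv', map_mul]
    linear_combination C (φ d) * C (φ e) * (-huv)
  filter_upwards [eventually_homsNear_map_eq hmap, eventually_homsNear_ne_zero hd,
    eventually_homsNear_ne_zero he] with ψ hψ hψd hψe η hη hη'
  have heval := congrArg (eval η) hψ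
  simp only [eval_map, eval₂_add, eval₂_mul, eval₂_C, hη, hη', mul_zero, add_zero, map_mul,
    mul_eq_zero, hψd, hψe, or_self] at heval

end ClearDenominators

theorem exists_div_eq_of_mem_closure_range {x : L} (hx : x ∈ Subfield.closure (Set.range φ)) :
    ∃ a b, φ b ≠ 0 ∧ φ a / φ b = x := by
  rw [← RingHom.coe_range, Subfield.mem_closure_iff, Subring.closure_eq] at hx
  obtain ⟨_, ⟨a, rfl⟩, _, ⟨b, rfl⟩, rfl⟩ := hx
  by_cases hb : φ b = 0
  · exact ⟨0, 1, by simp, by simp [hb]⟩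
  · exact ⟨a, b, hb, rfl⟩

/-- The polynomial `Q` is the minimal polynomial of `y` with the denominators cleared. -/
theorem exists_simple_root_polynomial [CharZero L] {y : L} {G H : A[X]} (hG : G.Monic)
    (hGy : G.eval₂ φ y = 0) (hHy : H.eval₂ φ y ≠ 0) :
    ∃ Q : A[X], Q.eval₂ φ y = 0 ∧ ∀ᶠ ψ in homsNear k φ, ∀ η, Q.eval₂ ψ η = 0 →
      G.eval₂ ψ η = 0 ∧ H.eval₂ ψ η ≠ 0 ∧ Q.derivative.eval₂ ψ η ≠ 0 := by
  let F := Subfield.closure (Set.range φ)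
  let κ : A →+* F := φ.codRestrict F fun a ↦ Subfield.subset_closure ⟨a, rfl⟩
  have hφ : φ = (algebraMap F L).comp κ := rfl
  have hκ : ∀ x, ∃ a b, κ b ≠ 0 ∧ κ a / κ b = x := by
    rintro ⟨x, hx⟩
    obtain ⟨a, b, hb, rfl⟩ := exists_div_eq_of_mem_closure_range hx
    exact ⟨a, b, fun h ↦ hb (congrArg Subtype.val h), rfl⟩
  have haeval (p : A[X]) : aeval y (p.map κ) = p.eval₂ φ y := by
    rw [aeval_def, eval₂_map, ← hφ]
  have hirr : Irreducible (minpoly F y) :=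
    minpoly.irreducible ⟨G.map κ, hG.map κ, (haeval G).trans hGy⟩
  obtain ⟨d, hd, Q, hQ⟩ := exists_map_eq_C_mul hκ (minpoly F y)
  have hassoc : Associated (minpoly F y) (Q.map κ) := by
    rw [hQ]
    exact associated_unit_mul_right _ _ (isUnit_C.2 hd.isUnit)
  have hdvd : Q.map κ ∣ G.map κ :=
    hassoc.symm.dvd.trans (minpoly.dvd F y ((haeval G).trans hGy))
  have hcoprime : IsCoprime (Q.map κ) (H.map κ) :=
    (hassoc.irreducible hirr).coprime_iff_not_dvd.2 fun h ↦ hHy <| by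
      rw [← haeval, ← minpoly.dvd_iff]
      exact hassoc.dvd.trans h
  have hsep : IsCoprime (Q.map κ) (Q.derivative.map κ) := by
    rw [← derivative_map]
    exact (hassoc.irreducible hirr).separable
  refine ⟨Q, ?_, ?_⟩
  · rw [← haeval, ← minpoly.dvd_iff]
    exact hassoc.dvd
  · rw [hφ, homsNear_comp]
    filter_upwards [eventually_eval₂_eq_zero_of_dvd hκ hdvd,
      eventually_eval₂_ne_zero_of_isCoprime hκ hcoprime,
      eventually_eval₂_ne_zero_of_isCoprime hκ hsep] with ψ hψG hψH hψQ η hη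
    exact ⟨hψG η hη, hψH η hη, hψQ η hη⟩

end SimpleRoots

section ClopenPieces

variable {E F : Type*} [NormedAddCommGroup E] [NormedSpace ℝ E] [NormedAddCommGroup F]
  [NormedSpace ℝ F]

/-- The locus of the equation `g = 0` and the inequation `H ≠ 0`; conjunctions of several of these
reduce to one of each by taking sums of squares and products. -/
def locus (g H : E → ℝ) : Set E := {x | g x = 0 ∧ H x ≠ 0}

/-- Near the origin, `A` is a subset of `Y` that is open and closed in `Y`. -/
structure IsClopenPiece (A Y : Set E) : Prop where
  subset : ∀ᶠ x in 𝓝 0, x ∈ A → x ∈ Y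
  mem_iff : ∀ᶠ x in 𝓝 0, x ∈ Y → ∀ᶠ x' in 𝓝 x, x' ∈ Y → (x' ∈ A ↔ x ∈ A)

/-- The set `A` contains the positive half of a germ of analytic arc starting at the origin. -/
def HasArc (A : Set E) : Prop :=
  ∃ γ : ℝ → E, AnalyticAt ℝ γ 0 ∧ γ 0 = 0 ∧ ∀ᶠ t in 𝓝[>] 0, γ t ∈ A

variable (E) in
/-- Curve selection: a clopen piece of an analytic locus adherent to the origin contains an arc. -/
def CurveSelection : Prop :=
  ∀ ⦃g H : E → ℝ⦄ ⦃A : Set E⦄, AnalyticAt ℝ g 0 → AnalyticAt ℝ H 0 →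
    IsClopenPiece A (locus g H) → (∃ᶠ x in 𝓝 0, x ∈ A) → HasArc A

theorem tendsto_nhdsGT_of_analyticAt {γ : ℝ → E} (hγ : AnalyticAt ℝ γ 0) (hγ₀ : γ 0 = 0) :
    Tendsto γ (𝓝[>] 0) (𝓝 0) :=
  (hγ₀ ▸ hγ.continuousAt.tendsto).mono_left nhdsWithin_le_nhds

theorem HasArc.mono {A B : Set E} (hA : HasArc A) (hAB : ∀ᶠ x in 𝓝 0, x ∈ A → x ∈ B) :
    HasArc B := by
  obtain ⟨γ, hγ, hγ₀, hγA⟩ := hA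
  refine ⟨γ, hγ, hγ₀, ?_⟩
  filter_upwards [hγA, (tendsto_nhdsGT_of_analyticAt hγ hγ₀).eventually hAB] with t ht hAB
  exact hAB ht

namespace IsClopenPiece

variable {A Y Y' : Set E}

omit [NormedSpace ℝ E] in
theorem congr_right (hA : IsClopenPiece A Y) (hY : ∀ᶠ x in 𝓝 0, x ∈ Y ↔ x ∈ Y') :
    IsClopenPiece A Y' where
  subset := by
    filter_upwards [hA.subset, hY] with x hx hxY h
    exact hxY.1 (hx h)
  mem_iff := by
    filter_upwards [hA.mem_iff, hY, hY.eventually_nhds] with x hx hxY hY h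
    filter_upwards [hx (hxY.2 h), hY] with x' hx' hxY' h'
    exact hx' (hxY'.2 h')

theorem preimage (hA : IsClopenPiece A Y) (e : F →L[ℝ] E) : IsClopenPiece (e ⁻¹' A) (e ⁻¹' Y) where
  subset := (e.continuous.tendsto' 0 0 (map_zero e)).eventually hA.subset
  mem_iff := ((e.continuous.tendsto' 0 0 (map_zero e)).eventually hA.mem_iff).mono fun _ hx h ↦
    e.continuous.continuousAt.eventually (hx h)

theorem eventually_mem_of_frequently (hA : IsClopenPiece A Y) {γ : ℝ → E} (hγ : AnalyticAt ℝ γ 0)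
    (hγ₀ : γ 0 = 0) (hγY : ∀ᶠ t in 𝓝[>] 0, γ t ∈ Y) (hγA : ∃ᶠ t in 𝓝[>] 0, γ t ∈ A) :
    ∀ᶠ t in 𝓝[>] 0, γ t ∈ A := by
  have hlim := tendsto_nhdsGT_of_analyticAt hγ hγ₀
  obtain ⟨ε, hε, hIoo⟩ := mem_nhdsGT_iff_exists_Ioo_subset.1 <|
    (hγY.and (hlim.eventually hA.mem_iff)).and
      (nhdsWithin_le_nhds hγ.eventually_continuousAt)
  obtain ⟨t₀, ht₀A, ht₀⟩ := (hγA.and_eventually (Ioo_mem_nhdsGT hε)).exists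
  filter_upwards [Ioo_mem_nhdsGT hε] with t ht
  refine (isPreconnected_Ioo.induction₂ (fun s t ↦ γ s ∈ A ↔ γ t ∈ A) (fun s hs ↦ ?_)
    (fun _ _ _ _ _ _ ↦ Iff.trans) (fun _ _ _ _ ↦ Iff.symm) ht₀ ht).1 ht₀A
  obtain ⟨⟨hsY, hsA⟩, hs'⟩ := hIoo hs
  filter_upwards [nhdsWithin_le_nhds (hs'.eventually (hsA hsY)), self_mem_nhdsWithin] with t htA ht
  exact (htA (hIoo ht).1.1).symm

end IsClopenPiece

theorem HasArc.of_clm {A : Set E} {e : F →L[ℝ] E} (h : HasArc (e ⁻¹' A)) : HasArc A := by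
  obtain ⟨γ, hγ, hγ₀, hγA⟩ := h
  exact ⟨e ∘ γ, (e.analyticAt _).comp hγ, by simp [hγ₀], hγA⟩

end ClopenPieces

section RootsOfFamilies

variable {V : Type*} [NormedAddCommGroup V] [NormedSpace ℝ V]

theorem eventually_continuousAt_eval_specialize (P : (analyticSubring ℝ V)[X]) :
    ∀ᶠ x in 𝓝 (0 : V), ∀ η : ℝ,
      ContinuousAt (fun p : V × ℝ ↦ (specialize p.1 P).eval p.2) (x, η) := by
  induction P using Polynomial.induction_on' with
  | add P Q hP hQ =>
    filter_upwards [hP, hQ] with x hxP hxQ η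
    simpa only [map_add, eval_add] using! (hxP η).add (hxQ η)
  | monomial n a =>
    filter_upwards [a.2.eventually_continuousAt] with x hx η
    simp only [← C_mul_X_pow_eq_monomial, map_mul, map_pow, specialize_C, specialize_X, eval_mul,
      eval_C, eval_pow, eval_X]
    exact (hx.comp_of_eq continuousAt_fst rfl).mul (continuousAt_snd.pow n)

theorem eventually_forall_root_of_eventually {G : (analyticSubring ℝ V)[X]} (hG : G.Monic) {k : ℕ}
    (hG₀ : specialize 0 G = X ^ k) {p : V × ℝ → Prop} (hp : ∀ᶠ q in 𝓝 0, p q) :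
    ∀ᶠ x in 𝓝 (0 : V), ∀ η, (specialize x G).eval η = 0 → p (x, η) := by
  refine eventually_forall_root_of_forall_root hG fun c hc ↦ ?_
  obtain rfl : c = 0 := by
    rw [hG₀, eval_pow, eval_X] at hc
    exact eq_zero_of_pow_eq_zero hc
  exact hp.mono fun q hq _ ↦ hq

theorem exists_uIcc_subset_mul_neg {f : ℝ → ℝ} {η : ℝ} (hη : f η = 0) (hderiv : deriv f η ≠ 0)
    {s : Set ℝ} (hs : s ∈ 𝓝 η) : ∃ a b, Set.uIcc a b ⊆ s ∧ f a * f b < 0 := by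
  wlog hpos : 0 < deriv f η generalizing f
  · have hneg := this (f := -f) (by simp [hη]) (by simpa [deriv.neg] using hderiv)
      (by simpa [deriv.neg] using lt_of_le_of_ne (not_lt.1 hpos) hderiv)
    simpa using hneg
  obtain ⟨ε, hε, hball⟩ := Metric.mem_nhds_iff.1
    (inter_mem hs (eventually_nhdsWithin_sign_eq_of_deriv_pos hpos hη))
  rw [Real.ball_eq_Ioo] at hball
  have hleft : SignType.sign (f (η - ε / 2)) = SignType.sign (η - ε / 2 - η) :=
    (@hball (η - ε / 2) ⟨by linarith, by linarith⟩).2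
  have hright : SignType.sign (f (η + ε / 2)) = SignType.sign (η + ε / 2 - η) :=
    (@hball (η + ε / 2) ⟨by linarith, by linarith⟩).2
  refine ⟨η - ε / 2, η + ε / 2, fun y hy ↦ ?_, mul_neg_of_neg_of_pos ?_ ?_⟩
  · rw [Set.uIcc_of_le (by linarith)] at hy
    exact (hball ⟨by linarith [hy.1], by linarith [hy.2]⟩).1
  · rw [← sign_eq_neg_one_iff]
    exact hleft.trans (sign_neg (by linarith))
  · rw [← sign_eq_one_iff]
    exact hright.trans (sign_pos (by linarith))

theorem eventually_exists_zero_of_deriv_ne_zero {X : Type*} [TopologicalSpace X] {F : X → ℝ → ℝ}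
    {x : X} {η : ℝ} (hF : ∀ x', Continuous (F x')) (hFx : ∀ y, ContinuousAt (fun x' ↦ F x' y) x)
    (hη : F x η = 0) (hderiv : deriv (F x) η ≠ 0) {s : Set ℝ} (hs : s ∈ 𝓝 η) :
    ∀ᶠ x' in 𝓝 x, ∃ y ∈ s, F x' y = 0 := by
  obtain ⟨a, b, hab, hsign⟩ := exists_uIcc_subset_mul_neg hη hderiv hs
  filter_upwards [((hFx a).mul (hFx b)).eventually_lt_const hsign] with x' hx'
  have hzero : (0 : ℝ) ∈ Set.uIcc (F x' a) (F x' b) := by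
    rcases mul_neg_iff.1 hx' with h | h
    exacts [Set.mem_uIcc.2 (.inr ⟨h.2.le, h.1.le⟩), Set.mem_uIcc.2 (.inl ⟨h.1.le, h.2.le⟩)]
  obtain ⟨y, hy, hy₀⟩ := intermediate_value_uIcc (hF x').continuousOn hzero
  exact ⟨y, hab hy, hy₀⟩

end RootsOfFamilies

section Projection

variable {V : Type*} [NormedAddCommGroup V] [NormedSpace ℝ V]

theorem eval₂_evalAt (P : (analyticSubring ℝ V)[X]) (x : V) (η : ℝ) :
    P.eval₂ (evalAt x) η = (specialize x P).eval η :=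
  eval₂_eq_eval_map _

/-- The generic value of an analytic function of the first variable along an ultrafilter. -/
noncomputable def genericValue (𝓤 : Ultrafilter (V × ℝ)) :
    analyticSubring ℝ V →+* Germ (𝓤 : Filter (V × ℝ)) ℝ :=
  (Germ.coeRingHom _).comp (RingHom.pi fun p ↦ evalAt p.1)

theorem genericValue_eq_zero_iff {𝓤 : Ultrafilter (V × ℝ)} {a : analyticSubring ℝ V} :
    genericValue 𝓤 a = 0 ↔ ∀ᶠ p : V × ℝ in 𝓤, (a : V → ℝ) p.1 = 0 :=
  Germ.coe_eq

theorem eval₂_genericValue_eq_zero_iff {𝓤 : Ultrafilter (V × ℝ)} {P : (analyticSubring ℝ V)[X]} :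
    P.eval₂ (genericValue 𝓤) ((Prod.snd : V × ℝ → ℝ) : Germ (𝓤 : Filter (V × ℝ)) ℝ) = 0 ↔
      ∀ᶠ p : V × ℝ in 𝓤, (specialize p.1 P).eval p.2 = 0 := by
  have heval : P.eval₂ (RingHom.pi fun p : V × ℝ ↦ evalAt p.1) Prod.snd =
      fun p ↦ (specialize p.1 P).eval p.2 := by
    ext p
    exact (hom_eval₂ P _ (Pi.evalRingHom (fun _ : V × ℝ ↦ ℝ) p) _).trans (eval₂_evalAt P p.1 p.2)
  have hcoe := hom_eval₂ P (RingHom.pi fun p : V × ℝ ↦ evalAt p.1)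
    (Germ.coeRingHom (𝓤 : Filter (V × ℝ))) Prod.snd
  rw [heval] at hcoe
  exact (Eq.congr_left hcoe.symm).trans Germ.coe_eq

theorem exists_equation_inequation_of_eventually_homsNear {𝓤 : Ultrafilter (V × ℝ)}
    {p : (analyticSubring ℝ V →+* ℝ) → Prop} (hp : ∀ᶠ ψ in homsNear ℝ (genericValue 𝓤), p ψ) :
    ∃ g H : V → ℝ, AnalyticAt ℝ g 0 ∧ AnalyticAt ℝ H 0 ∧ (∀ᶠ q : V × ℝ in 𝓤, q.1 ∈ locus g H) ∧
      ∀ x ∈ locus g H, p (evalAt x) := by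
  obtain ⟨K, hK, hKφ, c, hc, hpK⟩ := eventually_homsNear.1 hp
  have hsum (x : V) : ((∑ a ∈ hK.toFinset, a ^ 2 : analyticSubring ℝ V) : V → ℝ) x = 0 ↔
      ∀ a ∈ K, evalAt x a = 0 := by
    rw [← evalAt_apply, map_sum, Finset.sum_eq_zero_iff_of_nonneg fun a _ ↦ by
      simpa only [map_pow] using sq_nonneg _]
    simp
  refine ⟨_, c, (∑ a ∈ hK.toFinset, a ^ 2 : analyticSubring ℝ V).2, c.2, ?_, fun x hx ↦
    hpK _ ((hsum x).1 hx.1) hx.2⟩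
  have hKev : ∀ᶠ q : V × ℝ in 𝓤, ∀ a ∈ K, (a : V → ℝ) q.1 = 0 :=
    (eventually_all_finite hK).2 fun a ha ↦ genericValue_eq_zero_iff.1 (hKφ a ha)
  have hcev : ∀ᶠ q : V × ℝ in 𝓤, (c : V → ℝ) q.1 ≠ 0 :=
    Ultrafilter.eventually_not.2 (mt genericValue_eq_zero_iff.2 hc)
  filter_upwards [hKev, hcev] with q hq hqc
  exact ⟨(hsum q.1).2 hq, hqc⟩

/-- The locus `G = 0 ≠ H` in the total space `V × ℝ` of two analytic families of polynomials. -/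
def rootLocus (G H : (analyticSubring ℝ V)[X]) : Set (V × ℝ) :=
  locus (fun p ↦ (specialize p.1 G).eval p.2) fun p ↦ (specialize p.1 H).eval p.2

theorem exists_simple_root_family {G H : (analyticSubring ℝ V)[X]} (hG : G.Monic)
    {A : Set (V × ℝ)} (hAY : ∀ᶠ p in 𝓝 0, p ∈ A → p ∈ rootLocus G H) (hA : ∃ᶠ p in 𝓝 0, p ∈ A) :
    ∃ (Q : (analyticSubring ℝ V)[X]) (g h : V → ℝ), AnalyticAt ℝ g 0 ∧ AnalyticAt ℝ h 0 ∧
      (∃ᶠ p in 𝓝 0, p ∈ A ∧ p.1 ∈ locus g h ∧ (specialize p.1 Q).eval p.2 = 0) ∧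
      ∀ x ∈ locus g h, ∀ η, (specialize x Q).eval η = 0 →
        (x, η) ∈ rootLocus G H ∧ deriv (fun y ↦ (specialize x Q).eval y) η ≠ 0 := by
  have : (𝓝 (0 : V × ℝ) ⊓ 𝓟 A).NeBot := frequently_mem_iff_neBot.1 hA
  let 𝓤 := Ultrafilter.of (𝓝 (0 : V × ℝ) ⊓ 𝓟 A)
  have h𝓤 : (𝓤 : Filter (V × ℝ)) ≤ 𝓝 0 ⊓ 𝓟 A := Ultrafilter.of_le _
  have h𝓤A : ∀ᶠ p in 𝓤, p ∈ A := h𝓤 (mem_inf_of_right (mem_principal_self A))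
  have h𝓤Y : ∀ᶠ p in 𝓤, p ∈ rootLocus G H := by
    filter_upwards [h𝓤A, h𝓤 (mem_inf_of_left hAY)] with p hp hpY using hpY hp
  obtain ⟨Q, hQ, hQev⟩ := exists_simple_root_polynomial (k := ℝ) hG
    (eval₂_genericValue_eq_zero_iff.2 (h𝓤Y.mono fun p hp ↦ hp.1))
    (H := H) fun h ↦ ((h𝓤Y.and (eval₂_genericValue_eq_zero_iff.1 h)).exists).elim
      fun p hp ↦ hp.1.2 hp.2
  obtain ⟨g, h, hg, hh, hmem, hgh⟩ := exists_equation_inequation_of_eventually_homsNear hQev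
  refine ⟨Q, g, h, hg, hh, ?_, fun x hx η hη ↦ ?_⟩
  · exact ((h𝓤A.and (hmem.and (eval₂_genericValue_eq_zero_iff.1 hQ))).frequently).filter_mono
      (h𝓤.trans inf_le_left)
  · have hroot := hgh x hx η ((eval₂_evalAt Q x η).trans hη)
    simp only [eval₂_evalAt] at hroot
    refine ⟨⟨hroot.1, hroot.2.1⟩, ?_⟩
    rw [Polynomial.deriv, specialize, coe_mapRingHom, derivative_map]
    exact hroot.2.2

end Projection

section LiftingArcs

variable {V : Type*} [NormedAddCommGroup V] [NormedSpace ℝ V]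

theorem isClopenPiece_projection {G H Q : (analyticSubring ℝ V)[X]} {g h : V → ℝ} {A : Set (V × ℝ)}
    (hG : G.Monic) {k : ℕ} (hG₀ : specialize 0 G = X ^ k) (hA : IsClopenPiece A (rootLocus G H))
    (hQ : ∀ x ∈ locus g h, ∀ η, (specialize x Q).eval η = 0 →
      (x, η) ∈ rootLocus G H ∧ deriv (fun y ↦ (specialize x Q).eval y) η ≠ 0) :
    IsClopenPiece {x ∈ locus g h | ∃ η, (specialize x Q).eval η = 0 ∧ (x, η) ∈ A} (locus g h) where
  subset := .of_forall fun _ hx ↦ hx.1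
  mem_iff := by
    have hball := eventually_forall_root_of_eventually hG hG₀ <| continuousAt_snd.eventually
      (Metric.closedBall_mem_nhds (0 : V × ℝ).2 one_pos)
    filter_upwards [eventually_forall_root_of_eventually hG hG₀ hA.mem_iff, hball.eventually_nhds,
      eventually_continuousAt_eval_specialize Q] with x hxA hball hcont hx
    by_cases hxA' : ∃ η, (specialize x Q).eval η = 0 ∧ (x, η) ∈ A
    · obtain ⟨η, hη, hηA⟩ := hxA'
      have hmem := hxA η (hQ x hx η hη).1.1 (hQ x hx η hη).1
      rw [nhds_prod_eq] at hmem
      obtain ⟨t, ht, s, hs, hts⟩ := mem_prod_iff.1 hmem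
      have hroot := eventually_exists_zero_of_deriv_ne_zero
        (F := fun x' y ↦ (specialize x' Q).eval y) (fun x' ↦ (specialize x' Q).continuous)
        (fun y ↦ (hcont y).comp (f := fun x' ↦ (x', y)) (by fun_prop)) hη (hQ x hx η hη).2 hs
      filter_upwards [ht, hroot] with x' hx't ⟨η', hη's, hη'⟩ hx'
      exact iff_of_true ⟨hx', η', hη', (hts ⟨hx't, hη's⟩ (hQ x' hx' η' hη').1).2 hηA⟩
        ⟨hx, η, hη, hηA⟩
    · push Not at hxA'
      have hnear : ∀ᶠ x' in 𝓝 x, ∀ η ∈ Metric.closedBall (0 : ℝ) 1, (specialize x' Q).eval η = 0 →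
          (x', η) ∈ rootLocus G H → (x', η) ∉ A := by
        refine (isCompact_closedBall 0 1).eventually_forall_of_forall_eventually fun η _ ↦ ?_
        by_cases hη : (specialize x Q).eval η = 0
        · filter_upwards [hxA η (hQ x hx η hη).1.1 (hQ x hx η hη).1] with p hp _ hpY
          exact fun hpA ↦ hxA' η hη ((hp hpY).1 hpA)
        · filter_upwards [(hcont η).eventually_ne hη] with p hp hp₀ using absurd hp₀ hp
      filter_upwards [hball, hnear] with x' hball hx' hx'Y
      refine iff_of_false ?_ fun h ↦ h.2.elim fun η hη ↦ hxA' η hη.1 hη.2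
      rintro ⟨-, η, hη, hηA⟩
      have hηY := (hQ x' hx'Y η hη).1
      exact hx' η (hball η hηY.1) hη hηY hηA

/-- Composition with an analytic arc starting at the origin. -/
def pullback {γ : ℝ → V} (hγ : AnalyticAt ℝ γ 0) (hγ₀ : γ 0 = 0) :
    analyticSubring ℝ V →+* analyticSubring ℝ ℝ where
  toFun a := ⟨(a : V → ℝ) ∘ γ, AnalyticAt.comp_of_eq a.2 hγ hγ₀⟩
  map_one' := rfl
  map_mul' _ _ := rfl
  map_zero' := rfl
  map_add' _ _ := rfl

theorem specialize_map_pullback {γ : ℝ → V} (hγ : AnalyticAt ℝ γ 0) (hγ₀ : γ 0 = 0) (s : ℝ)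
    (P : (analyticSubring ℝ V)[X]) :
    specialize s (P.map (pullback hγ hγ₀)) = specialize (γ s) P := by
  simp only [specialize, coe_mapRingHom, Polynomial.map_map]
  rfl

theorem frequently_exists_of_eventually_exists_mem {α ι : Type*} {l : Filter α} [l.NeBot]
    {T : Set ι} (hT : T.Finite) {p : ι → α → Prop} (h : ∀ᶠ a in l, ∃ i ∈ T, p i a) :
    ∃ i ∈ T, ∃ᶠ a in l, p i a := by
  by_contra! hall
  have hnone : ∀ᶠ a in l, ∀ i ∈ T, ¬p i a :=
    (eventually_all_finite hT).2 fun i hi ↦ hall i hi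
  obtain ⟨a, ⟨i, hi, hia⟩, ha⟩ := (h.and hnone).exists
  exact ha i hi hia

theorem exists_analyticAt_frequently_mem_of_root {G : (analyticSubring ℝ V)[X]} (hG : G.Monic)
    {γ : ℝ → V} (hγ : AnalyticAt ℝ γ 0) (hγ₀ : γ 0 = 0) {B : Set (V × ℝ)}
    (hB : ∀ᶠ t in 𝓝[>] 0, ∃ η, (specialize (γ t) G).eval η = 0 ∧ (γ t, η) ∈ B) :
    ∃ N ≠ 0, ∃ ζ : ℝ → ℝ, AnalyticAt ℝ ζ 0 ∧ ∃ᶠ s in 𝓝[>] 0, (γ (s ^ N), ζ s) ∈ B := by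
  obtain ⟨N, hN, T, hT, hTa, hcover⟩ := hasPuiseuxBranches_zeroSet (hG.map (pullback hγ hγ₀))
  obtain ⟨ζ, hζT, hζ⟩ := frequently_exists_of_eventually_exists_mem (l := 𝓝[>] (0 : ℝ)) hT
    (p := fun ζ s ↦ (γ (s ^ N), ζ s) ∈ B) <| by
      filter_upwards [(tendsto_pow_nhdsGT_zero hN).eventually hB, hcover] with s ⟨η, hη, hηB⟩ hcover
      obtain ⟨ζ, hζ, rfl⟩ := hcover η <| by
        rwa [zeroSet, Set.mem_ofPred, specialize_map_pullback]
      exact ⟨ζ, hζ, hηB⟩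
  exact ⟨N, hN, ζ, hTa ζ hζT, hζ⟩

theorem hasArc_of_hasArc_projection {G H Q : (analyticSubring ℝ V)[X]} {g h : V → ℝ}
    {A : Set (V × ℝ)} (hG : G.Monic) {k : ℕ} (hG₀ : specialize 0 G = X ^ k)
    (hA : IsClopenPiece A (rootLocus G H))
    (hQ : ∀ x ∈ locus g h, ∀ η, (specialize x Q).eval η = 0 → (x, η) ∈ rootLocus G H)
    (harc : HasArc {x ∈ locus g h | ∃ η, (specialize x Q).eval η = 0 ∧ (x, η) ∈ A}) :
    HasArc A := by
  obtain ⟨γ, hγ, hγ₀, hγA⟩ := harc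
  obtain ⟨N, hN, ζ, hζa, hζ⟩ := exists_analyticAt_frequently_mem_of_root hG hγ hγ₀
    (B := {p ∈ A | (specialize p.1 Q).eval p.2 = 0}) <| hγA.mono fun t ⟨ht, η, hη, hηA⟩ ↦
      ⟨η, (hQ _ ht η hη).1, hηA, hη⟩
  have hδ : AnalyticAt ℝ (fun s ↦ (γ (s ^ N), ζ s)) 0 :=
    (hγ.fun_comp_of_eq (analyticAt_id.pow N) (zero_pow hN)).prod hζa
  have hev (P : (analyticSubring ℝ V)[X]) :
      AnalyticAt ℝ (fun s ↦ (specialize (γ (s ^ N)) P).eval (ζ s)) 0 :=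
    (analyticAt_eval_specialize P (ζ 0)).fun_comp_of_eq hδ (by simp [hN, hγ₀])
  have hQζ : ∀ᶠ s in 𝓝 0, (specialize (γ (s ^ N)) Q).eval (ζ s) = 0 :=
    (hev Q).frequently_zero_iff_eventually_zero.1 <|
      (hζ.mono fun s hs ↦ hs.2).filter_mono (nhdsWithin_mono 0 fun s (hs : 0 < s) ↦ hs.ne')
  have hY : ∀ᶠ s in 𝓝[>] 0, (γ (s ^ N), ζ s) ∈ rootLocus G H := by
    filter_upwards [(tendsto_pow_nhdsGT_zero hN).eventually hγA,
      nhdsWithin_le_nhds hQζ] with s hs hsQ using hQ _ hs.1 _ hsQ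
  have hζ₀ : ζ 0 = 0 := by
    have hlim := tendsto_nhds_unique
      ((hev G).continuousAt.tendsto.mono_left nhdsWithin_le_nhds)
      (tendsto_const_nhds.congr' (hY.mono fun s hs ↦ hs.1.symm))
    rw [zero_pow hN, hγ₀, hG₀, eval_pow, eval_X] at hlim
    exact eq_zero_of_pow_eq_zero hlim
  have hδ₀ : (γ (0 ^ N), ζ 0) = 0 := by simp [hN, hγ₀, hζ₀]
  exact ⟨_, hδ, hδ₀, hA.eventually_mem_of_frequently hδ hδ₀ hY (hζ.mono fun s hs ↦ hs.1)⟩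

theorem hasArc_of_isClopenPiece_rootLocus (hV : CurveSelection V) {G H : (analyticSubring ℝ V)[X]}
    {A : Set (V × ℝ)} (hG : G.Monic) {k : ℕ} (hG₀ : specialize 0 G = X ^ k)
    (hA : IsClopenPiece A (rootLocus G H)) (hfreq : ∃ᶠ p in 𝓝 0, p ∈ A) : HasArc A := by
  obtain ⟨Q, g, h, hg, hh, hfreqQ, hQ⟩ := exists_simple_root_family hG hA.subset hfreq
  refine hasArc_of_hasArc_projection hG hG₀ hA (fun x hx η hη ↦ (hQ x hx η hη).1)
    (hV hg hh (isClopenPiece_projection hG hG₀ hA hQ) ?_)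
  have hfst : Tendsto (Prod.fst : V × ℝ → V) (𝓝 0) (𝓝 0) := continuous_fst.tendsto' _ _ rfl
  exact hfst.frequently (hfreqQ.mono fun p hp ↦ ⟨hp.2.1, p.2, hp.2.2, hp.1⟩)

end LiftingArcs

section Lines

variable {V : Type*} [NormedAddCommGroup V] [NormedSpace ℝ V]

theorem frequently_and_ne_zero {f : V → ℝ} (hf : AnalyticAt ℝ f 0) (hf₀ : ¬∀ᶠ x in 𝓝 0, f x = 0)
    {p : V → Prop} (hp : ∃ᶠ x in 𝓝 0, ∀ᶠ x' in 𝓝 x, p x') : ∃ᶠ x in 𝓝 0, p x ∧ f x ≠ 0 := by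
  obtain ⟨ε, hε, hball⟩ := Metric.eventually_nhds_iff_ball.1 hf.eventually_analyticAt
  have hne : ∀ᶠ x in 𝓝 0, ∃ᶠ x' in 𝓝 x, f x' ≠ 0 := by
    filter_upwards [Metric.ball_mem_nhds 0 hε] with x hx hzero
    simp only [not_not] at hzero
    exact hf₀ <| Filter.eventually_of_mem (Metric.ball_mem_nhds 0 hε) <|
      AnalyticOnNhd.eqOn_zero_of_preconnected_of_eventuallyEq_zero hball
        (convex_ball 0 ε).isPreconnected hx hzero
  refine frequently_iff.2 fun {s} hs ↦ ?_
  obtain ⟨x, hx, hxne, hxs⟩ := (hp.and_eventually (hne.and (eventually_mem_nhds_iff.2 hs))).exists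
  obtain ⟨x', hx', hx'p, hx's⟩ := (hxne.and_eventually (hx.and hxs)).exists
  exact ⟨x', hx's, hx'p, hx'⟩

theorem not_eventually_mul_eq_zero {f g : V → ℝ} (hf : AnalyticAt ℝ f 0) (hg : AnalyticAt ℝ g 0)
    (hf₀ : ¬∀ᶠ x in 𝓝 0, f x = 0) (hg₀ : ¬∀ᶠ x in 𝓝 0, g x = 0) :
    ¬∀ᶠ x in 𝓝 0, f x * g x = 0 := by
  have hf' : ∃ᶠ x in 𝓝 0, ∀ᶠ x' in 𝓝 x, f x' ≠ 0 :=
    (not_eventually.1 hf₀ |>.and_eventually hf.eventually_continuousAt).mono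
      fun x hx ↦ hx.2.eventually_ne hx.1
  exact fun hfg ↦ ((frequently_and_ne_zero hg hg₀ hf').and_eventually hfg).exists.elim
    fun x hx ↦ mul_ne_zero hx.1.1 hx.1.2 hx.2

theorem exists_line_ne_zero {f : V → ℝ} (hf : AnalyticAt ℝ f 0) (hf₀ : ¬∀ᶠ x in 𝓝 0, f x = 0) :
    ∃ v : V, ¬∀ᶠ t : ℝ in 𝓝 0, f (t • v) = 0 := by
  obtain ⟨ε, hε, hball⟩ := Metric.eventually_nhds_iff_ball.1 hf.eventually_analyticAt
  obtain ⟨v, hv, hvε⟩ := (not_eventually.1 hf₀ |>.and_eventually (Metric.ball_mem_nhds 0 hε)).exists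
  refine ⟨v, fun hzero ↦ hv ?_⟩
  have hline : AnalyticOnNhd ℝ (fun t : ℝ ↦ f (t • v)) {t : ℝ | t • v ∈ Metric.ball (0 : V) ε} :=
    fun t ht ↦ (hball _ ht).fun_comp (f := fun t : ℝ ↦ t • v) (analyticAt_id.smul analyticAt_const)
  have hconv : Convex ℝ {t : ℝ | t • v ∈ Metric.ball (0 : V) ε} :=
    (convex_ball 0 ε).linear_preimage (LinearMap.toSpanSingleton ℝ V v)
  simpa using hline.eqOn_zero_of_preconnected_of_eventuallyEq_zero hconv.isPreconnected
    (by simp [hε]) hzero (show (1 : ℝ) ∈ _ by simpa using hvε)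

end Lines

section CurveSelectionStep

variable {E V : Type*} [NormedAddCommGroup E] [NormedSpace ℝ E] [NormedAddCommGroup V]
  [NormedSpace ℝ V] {g H : E → ℝ} {A : Set E}

theorem IsClopenPiece.hasArc_of_line (hV : CurveSelection V) (e : (V × ℝ) ≃L[ℝ] E)
    (hg : AnalyticAt ℝ g 0) (hH : AnalyticAt ℝ H 0) (hg₀ : ¬∀ᶠ y in 𝓝 0, g (e (0, y)) = 0)
    (hH₀ : ¬∀ᶠ y in 𝓝 0, H (e (0, y)) = 0) (hA : IsClopenPiece A (locus g H))
    (hfreq : ∃ᶠ x in 𝓝 0, x ∈ A) : HasArc A := by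
  have hcomp {f : E → ℝ} (hf : AnalyticAt ℝ f 0) : AnalyticAt ℝ (f ∘ e) 0 :=
    hf.comp_of_eq (e.analyticAt 0) (map_zero e)
  obtain ⟨P, k, hP, hP₀, hgP⟩ := exists_monic_eq_zero_iff_of_line (hcomp hg) hg₀
  obtain ⟨Q, -, -, -, hHQ⟩ := exists_monic_eq_zero_iff_of_line (hcomp hH) hH₀
  have hY : ∀ᶠ p in 𝓝 0, p ∈ e ⁻¹' locus g H ↔ p ∈ rootLocus P Q := by
    filter_upwards [hgP, hHQ] with p hpP hpQ using and_congr hpP hpQ.not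
  refine HasArc.of_clm (e := (e : V × ℝ →L[ℝ] E)) <| hasArc_of_isClopenPiece_rootLocus hV hP hP₀
    ((hA.preimage (e : V × ℝ →L[ℝ] E)).congr_right hY) ?_
  rw [← map_zero e, ← e.map_nhds_eq, frequently_map] at hfreq
  exact hfreq

theorem exists_prod_continuousLinearEquiv [FiniteDimensional ℝ E] {v : E} (hv : v ≠ 0) :
    ∃ (W : Submodule ℝ E) (e : (W × ℝ) ≃L[ℝ] E), W ≠ ⊤ ∧ ∀ t, e (0, t) = t • v := by
  obtain ⟨W, hW⟩ := (ℝ ∙ v).exists_isCompl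
  let e : (W × ℝ) ≃ₗ[ℝ] E := ((LinearEquiv.refl ℝ W).prodCongr
    (LinearEquiv.toSpanNonzeroSingleton ℝ E v hv)).trans (Submodule.prodEquivOfIsCompl W _ hW.symm)
  refine ⟨W, e.toContinuousLinearEquiv, ?_, fun t ↦ by simp [e]⟩
  rintro rfl
  exact hv (by simpa using eq_bot_of_isCompl_top hW)

theorem IsClopenPiece.hasArc_of_not_eventually_eq_zero [FiniteDimensional ℝ E]
    (hE : ∀ W : Submodule ℝ E, W ≠ ⊤ → CurveSelection W) (hg : AnalyticAt ℝ g 0)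
    (hH : AnalyticAt ℝ H 0) (hg₀ : ¬∀ᶠ x in 𝓝 0, g x = 0) (hA : IsClopenPiece A (locus g H))
    (hfreq : ∃ᶠ x in 𝓝 0, x ∈ A) : HasArc A := by
  have hfreqY : ∃ᶠ x in 𝓝 0, x ∈ locus g H :=
    (hfreq.and_eventually hA.subset).mono fun x hx ↦ hx.2 hx.1
  have hH₀ : ¬∀ᶠ x in 𝓝 0, H x = 0 := not_eventually.2 <| hfreqY.mono fun x hx ↦ hx.2
  obtain ⟨v, hv⟩ := exists_line_ne_zero (hg.fun_mul hH) (not_eventually_mul_eq_zero hg hH hg₀ hH₀)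
  have hv₀ : v ≠ 0 := by
    rintro rfl
    have hg0 : g 0 ≠ 0 := fun h ↦ hv (by simp [h])
    exact ((hg.continuousAt.eventually_ne hg0).and_frequently hfreqY).exists.elim
      fun x hx ↦ hx.1 hx.2.1
  obtain ⟨W, e, hW, he⟩ := exists_prod_continuousLinearEquiv hv₀
  refine hA.hasArc_of_line (hE W hW) e hg hH (fun h ↦ hv ?_) (fun h ↦ hv ?_) hfreq
  · filter_upwards [h] with t ht
    rw [← he, ht, zero_mul]
  · filter_upwards [h] with t ht
    rw [← he, ht, mul_zero]

end CurveSelectionStep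

section OpenPieces

namespace IsClopenPiece

variable {E : Type*} [NormedAddCommGroup E] {A Y Z : Set E}

theorem inter_of_subset (hA : IsClopenPiece A Y) (hZ : ∀ᶠ x in 𝓝 0, x ∈ Z → x ∈ Y) :
    IsClopenPiece (A ∩ Z) Z where
  subset := .of_forall fun _ hx ↦ hx.2
  mem_iff := by
    filter_upwards [hA.mem_iff, hZ, hZ.eventually_nhds] with x hx hxZ hZ h
    filter_upwards [hx (hxZ h), hZ] with x' hx' hx'Z h'
    exact and_congr (hx' (hx'Z h')) (iff_of_true h' h)

theorem eventually_mem_of_mem_closure (hA : IsClopenPiece A Y) :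
    ∀ᶠ x in 𝓝 0, x ∈ Y → x ∈ closure A → x ∈ A := by
  filter_upwards [hA.mem_iff, hA.subset.eventually_nhds] with x hx hAY hxY hxA
  obtain ⟨x', hx'A, hx', hx'Y⟩ :=
    ((mem_closure_iff_frequently.1 hxA).and_eventually ((hx hxY).and hAY)).exists
  exact (hx' (hx'Y hx'A)).1 hx'A

theorem eventually_mem_nhds (hA : IsClopenPiece A Y)
    (hY : ∀ᶠ x in 𝓝 0, x ∈ Y → Y ∈ 𝓝 x) : ∀ᶠ x in 𝓝 0, x ∈ A → A ∈ 𝓝 x := by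
  filter_upwards [hA.mem_iff, hA.subset, hY] with x hx hAY hxY hxA
  filter_upwards [hx (hAY hxA), hxY (hAY hxA)] with x' hx' hx'Y using (hx' hx'Y).2 hxA

theorem hasArc_of_zero_mem [NormedSpace ℝ E] (hA : IsClopenPiece A Y) (hY : 0 ∈ Y)
    (hfreq : ∃ᶠ x in 𝓝 0, x ∈ A) : HasArc A := by
  have hA₀ : (0 : E) ∈ A := hA.eventually_mem_of_mem_closure.self_of_nhds hY
    (mem_closure_iff_frequently.2 hfreq)
  exact ⟨fun _ ↦ 0, analyticAt_const, rfl, .of_forall fun _ ↦ hA₀⟩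

end IsClopenPiece

variable {E : Type*} [NormedAddCommGroup E] [NormedSpace ℝ E] {g H : E → ℝ} {A : Set E}

theorem exists_frequently_smul_mem [FiniteDimensional ℝ E] (hE : Module.finrank ℝ E ≤ 1)
    (hA₀ : 0 ∉ A) (hA : ∃ᶠ x in 𝓝 0, x ∈ A) : ∃ v : E, ∃ᶠ t : ℝ in 𝓝[>] 0, t • v ∈ A := by
  obtain ⟨v, hv⟩ := finrank_le_one_iff.1 hE
  have hopen : IsOpenMap (ContinuousLinearMap.toSpanSingleton ℝ v) :=
    ContinuousLinearMap.isOpenMap _ hv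
  have hline : ∃ᶠ t : ℝ in 𝓝 0, t • v ∈ A :=
    frequently_map.1 (hA.filter_mono (map_zero (ContinuousLinearMap.toSpanSingleton ℝ v) ▸
      hopen.nhds_le 0))
  have hpunctured : ∃ᶠ t : ℝ in 𝓝[≠] 0, t • v ∈ A :=
    frequently_nhdsWithin_iff.2 <| hline.mono fun t ht ↦
      ⟨ht, by rintro rfl; exact hA₀ (by simpa using ht)⟩
  rw [← nhdsLT_sup_nhdsGT, frequently_sup] at hpunctured
  refine hpunctured.elim (fun h ↦ ⟨-v, ?_⟩) fun h ↦ ⟨v, h⟩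
  have hneg : Tendsto (fun t : ℝ ↦ -t) (𝓝[<] 0) (𝓝[>] 0) := by
    simpa using tendsto_neg_nhdsLT (a := (0 : ℝ))
  exact hneg.frequently (by simpa using h)

theorem IsClopenPiece.hasArc_of_finrank_le_one [FiniteDimensional ℝ E]
    (hE : Module.finrank ℝ E ≤ 1) (hH : AnalyticAt ℝ H 0) (hg₀ : ∀ᶠ x in 𝓝 0, g x = 0)
    (hA : IsClopenPiece A (locus g H)) (hfreq : ∃ᶠ x in 𝓝 0, x ∈ A) : HasArc A := by
  by_cases hY : (0 : E) ∈ locus g H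
  · exact hA.hasArc_of_zero_mem hY hfreq
  obtain ⟨v, hv⟩ :=
    exists_frequently_smul_mem hE (fun h ↦ hY (hA.subset.self_of_nhds h)) hfreq
  have hγ : AnalyticAt ℝ (fun t : ℝ ↦ t • v) 0 := analyticAt_id.smul analyticAt_const
  have hlim := tendsto_nhdsGT_of_analyticAt hγ (zero_smul ℝ v)
  have hHne : ∀ᶠ t : ℝ in 𝓝[≠] 0, H (t • v) ≠ 0 :=
    (hH.fun_comp_of_eq hγ (zero_smul ℝ v)).eventually_eq_zero_or_eventually_ne_zero.resolve_left
      fun hH₀ ↦ ((hv.and_eventually ((hlim.eventually hA.subset).and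
        (nhdsWithin_le_nhds hH₀))).exists).elim fun t ht ↦ (ht.2.1 ht.1).2 ht.2.2
  have hpos : 𝓝[>] (0 : ℝ) ≤ 𝓝[≠] 0 := nhdsWithin_mono 0 fun t (ht : 0 < t) ↦ ht.ne'
  exact ⟨_, hγ, zero_smul ℝ v, hA.eventually_mem_of_frequently hγ (zero_smul ℝ v)
    ((hlim.eventually hg₀).and (hpos hHne)) hv⟩

end OpenPieces

section Rotations

variable {E : Type*} [NormedAddCommGroup E] [InnerProductSpace ℝ E] {H : E → ℝ} {A : Set E}

theorem apply_eq_zero_of_isLocalExtrOn_sphere [CompleteSpace E] {f : E → ℝ} {f' : StrongDual ℝ E}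
    {x w : E} (hf : HasStrictFDerivAt f f' x) (hextr : IsLocalExtrOn f (Metric.sphere 0 ‖x‖) x)
    (hx : x ≠ 0) (hw : inner ℝ x w = 0) : f' w = 0 := by
  have hsphere : Metric.sphere (0 : E) ‖x‖ = {y | ‖y‖ ^ 2 = ‖x‖ ^ 2} := by
    ext y
    simp
  rw [hsphere] at hextr
  obtain ⟨a, b, hab, heq⟩ := hextr.exists_multipliers_of_hasStrictFDerivAt_1d
    (hasStrictFDerivAt_norm_sq x) hf
  have hb : b ≠ 0 := by
    rintro rfl
    have ha : a ≠ 0 := fun ha ↦ hab (by simp [ha])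
    simpa [ha, hx] using DFunLike.congr_fun heq x
  simpa [hw, hb] using DFunLike.congr_fun heq w

-- A maximum of `H ^ 2` on a sphere restricted to `A` cannot be a boundary point of `A`.
theorem IsClopenPiece.frequently_fderiv_apply_eq_zero [FiniteDimensional ℝ E]
    (hH : AnalyticAt ℝ H 0) {Ω : E →L[ℝ] E} (hΩ : ∀ x, inner ℝ x (Ω x) = 0)
    (hA : IsClopenPiece A {x | H x ≠ 0}) (hfreq : ∃ᶠ x in 𝓝 0, x ∈ A) :
    ∃ᶠ x in 𝓝 0, x ∈ A ∧ fderiv ℝ H x (Ω x) = 0 := by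
  have hopen : ∀ᶠ x in 𝓝 0, x ∈ A → A ∈ 𝓝 x :=
    hA.eventually_mem_nhds <| hH.eventually_continuousAt.mono fun x hx h ↦ hx.eventually_ne h
  refine frequently_iff.2 fun {U} hU ↦ ?_
  obtain ⟨ε, hε, hball⟩ := Metric.eventually_nhds_iff_ball.1 <|
    (eventually_mem_set.2 hU).and <| hH.eventually_analyticAt.and <|
      hA.eventually_mem_of_mem_closure.and <| hopen.and hA.subset
  obtain ⟨x₀, hx₀A, hx₀⟩ := (hfreq.and_eventually (Metric.ball_mem_nhds 0 hε)).exists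
  have hsphere : Metric.sphere (0 : E) ‖x₀‖ ⊆ Metric.ball 0 ε :=
    Metric.sphere_subset_ball (by simpa using hx₀)
  obtain ⟨x, ⟨hx, hxA⟩, hmax⟩ :=
    ((isCompact_sphere (0 : E) ‖x₀‖).inter_right isClosed_closure).exists_isMaxOn
      (f := fun x ↦ H x ^ 2) ⟨x₀, by simp, subset_closure hx₀A⟩ fun y hy ↦
      ((hball y (hsphere hy.1)).2.1.continuousAt.pow 2).continuousWithinAt
  obtain ⟨hxU, hxH, hxclosure, hxopen, -⟩ := hball x (hsphere hx)
  have hHx : H x ≠ 0 := by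
    have hle : H x₀ ^ 2 ≤ H x ^ 2 := hmax ⟨by simp, subset_closure hx₀A⟩
    have hpos : 0 < H x₀ ^ 2 := sq_pos_of_ne_zero ((hball x₀ hx₀).2.2.2.2 hx₀A)
    exact sq_pos_iff.1 (hpos.trans_le hle)
  have hxA' : x ∈ A := hxclosure hHx hxA
  refine ⟨x, hxU, hxA', ?_⟩
  rcases eq_or_ne x 0 with rfl | hx₀'
  · simp
  have hextr : IsLocalExtrOn (fun x ↦ H x ^ 2) (Metric.sphere 0 ‖x‖) x := by
    refine Or.inr (hmax.filter_mono <| le_principal_iff.2 ?_)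
    rw [mem_sphere_zero_iff_norm.1 hx]
    filter_upwards [self_mem_nhdsWithin, nhdsWithin_le_nhds (hxopen hxA')] with y hy hyA
      using ⟨hy, subset_closure hyA⟩
  have hzero :=
    apply_eq_zero_of_isLocalExtrOn_sphere (hxH.hasStrictFDerivAt.pow 2) hextr hx₀' (hΩ x)
  simpa [hHx] using hzero

end Rotations

theorem analyticAt_clm_apply {𝕜 X F G : Type*} [NontriviallyNormedField 𝕜]
    [NormedAddCommGroup X] [NormedSpace 𝕜 X] [NormedAddCommGroup F] [NormedSpace 𝕜 F]
    [NormedAddCommGroup G] [NormedSpace 𝕜 G] {f : X → F →L[𝕜] G} {u : X → F} {x : X}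
    (hf : AnalyticAt 𝕜 f x) (hu : AnalyticAt 𝕜 u x) : AnalyticAt 𝕜 (fun y ↦ f y (u y)) x :=
  ((ContinuousLinearMap.id 𝕜 (F →L[𝕜] G)).analyticAt_bilinear (f x, u x)).fun_comp
    (f := fun y ↦ (f y, u y)) (hf.prod hu)

section CurveSelection

variable {E : Type*} [NormedAddCommGroup E] [InnerProductSpace ℝ E] {g H : E → ℝ} {A : Set E}

theorem exists_orthonormal_pair [FiniteDimensional ℝ E] (hE : 1 < Module.finrank ℝ E) :
    ∃ a b : E, ‖a‖ = 1 ∧ ‖b‖ = 1 ∧ inner ℝ a b = 0 := by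
  let e := stdOrthonormalBasis ℝ E
  have he : (⟨0, zero_lt_one.trans hE⟩ : Fin (Module.finrank ℝ E)) ≠ ⟨1, hE⟩ := by simp
  exact ⟨e ⟨0, _⟩, e ⟨1, hE⟩, e.norm_eq_one _, e.norm_eq_one _, e.inner_eq_zero he⟩

/-- The generator of the rotations in the plane spanned by the orthonormal vectors `a` and `b`. -/
noncomputable def rotationGenerator (a b : E) : E →L[ℝ] E :=
  (innerSL ℝ a).smulRight b - (innerSL ℝ b).smulRight a

theorem rotationGenerator_apply (a b x : E) :
    rotationGenerator a b x = inner ℝ a x • b - inner ℝ b x • a :=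
  rfl

theorem inner_rotationGenerator_self (a b x : E) : inner ℝ x (rotationGenerator a b x) = 0 := by
  rw [rotationGenerator_apply, inner_sub_right, inner_smul_right, inner_smul_right,
    real_inner_comm a x, real_inner_comm b x, mul_comm, sub_self]

theorem not_eventually_inner_eq_zero {a : E} (ha : a ≠ 0) :
    ¬∀ᶠ x in 𝓝 0, inner ℝ a x = 0 := fun h ↦ by
  have hline : Tendsto (fun t : ℝ ↦ t • a) (𝓝[≠] 0) (𝓝 0) :=
    (Continuous.tendsto' (by fun_prop) 0 0 (zero_smul ℝ a)).mono_left nhdsWithin_le_nhds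
  obtain ⟨t, ht, ht₀⟩ := ((hline.eventually h).and self_mem_nhdsWithin).exists
  rw [inner_smul_right, real_inner_self_eq_norm_sq] at ht
  simp_all

theorem exists_fderiv_mul_rotationGenerator_ne_zero {a b : E} (ha : ‖a‖ = 1) (hb : ‖b‖ = 1)
    (hab : inner ℝ a b = 0) (hH : AnalyticAt ℝ H 0) (hH₀ : ¬∀ᶠ x in 𝓝 0, H x = 0) :
    ∃ l : E → ℝ, AnalyticAt ℝ l 0 ∧ (¬∀ᶠ x in 𝓝 0, l x = 0) ∧
      ¬∀ᶠ x in 𝓝 0, fderiv ℝ (fun y ↦ H y * l y) x (rotationGenerator a b x) = 0 := by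
  by_cases hD : ∀ᶠ x in 𝓝 0, fderiv ℝ H x (rotationGenerator a b x) = 0
  · have hinner (c : E) : AnalyticAt ℝ (fun x ↦ inner ℝ c x) 0 := (innerSL ℝ c).analyticAt 0
    have hne (c : E) (hc : ‖c‖ = 1) : ¬∀ᶠ x in 𝓝 0, inner ℝ c x = 0 :=
      not_eventually_inner_eq_zero (norm_ne_zero_iff.1 (hc ▸ one_ne_zero))
    refine ⟨fun x ↦ inner ℝ a x, hinner a, hne a ha, fun hzero ↦
      not_eventually_mul_eq_zero hH (hinner b) hH₀ (hne b hb) ?_⟩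
    filter_upwards [hD, hzero, hH.eventually_analyticAt] with x hx hxzero hxH
    have hl : HasFDerivAt (fun x ↦ inner ℝ a x) (innerSL ℝ a) x := (innerSL ℝ a).hasFDerivAt
    rw [(hxH.differentiableAt.hasFDerivAt.fun_mul hl).fderiv] at hxzero
    rw [add_apply, smul_apply, smul_apply, hx] at hxzero
    simpa [rotationGenerator_apply, inner_sub_right, inner_smul_right, hab, ha] using hxzero
  · exact ⟨fun _ ↦ 1, analyticAt_const, fun h ↦ one_ne_zero h.self_of_nhds, by simpa using hD⟩

theorem IsClopenPiece.hasArc_of_one_lt_finrank [FiniteDimensional ℝ E]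
    (hdim : 1 < Module.finrank ℝ E) (hE : ∀ W : Submodule ℝ E, W ≠ ⊤ → CurveSelection W)
    (hH : AnalyticAt ℝ H 0) (hg₀ : ∀ᶠ x in 𝓝 0, g x = 0) (hA : IsClopenPiece A (locus g H))
    (hfreq : ∃ᶠ x in 𝓝 0, x ∈ A) : HasArc A := by
  obtain ⟨a, b, ha, hb, hab⟩ := exists_orthonormal_pair hdim
  have hH₀ : ¬∀ᶠ x in 𝓝 0, H x = 0 := not_eventually.2 <|
    (hfreq.and_eventually hA.subset).mono fun x hx ↦ (hx.2 hx.1).2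
  obtain ⟨l, hl, hl₀, hD⟩ := exists_fderiv_mul_rotationGenerator_ne_zero ha hb hab hH hH₀
  have hHl : AnalyticAt ℝ (fun x ↦ H x * l x) 0 := hH.fun_mul hl
  have hDan : AnalyticAt ℝ (fun x ↦ fderiv ℝ (fun y ↦ H y * l y) x (rotationGenerator a b x)) 0 :=
    analyticAt_clm_apply hHl.fderiv ((rotationGenerator a b).analyticAt 0)
  have hopen : ∀ᶠ x in 𝓝 0, x ∈ A → A ∈ 𝓝 x := by
    refine hA.eventually_mem_nhds ?_
    filter_upwards [hg₀.eventually_nhds, hH.eventually_continuousAt] with x hx hxH hxY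
    filter_upwards [hx, hxH.eventually_ne hxY.2] with x' hx' hx'H using ⟨hx', hx'H⟩
  have hsub : ∀ᶠ x in 𝓝 0, x ∈ {x | H x * l x ≠ 0} → x ∈ locus g H :=
    hg₀.mono fun x hx hxHl ↦ ⟨hx, left_ne_zero_of_mul hxHl⟩
  have hfreq' : ∃ᶠ x in 𝓝 0, x ∈ A ∩ {x | H x * l x ≠ 0} := by
    refine ((frequently_and_ne_zero hl hl₀ (p := (· ∈ A)) ((hfreq.and_eventually hopen).mono
      fun x hx ↦ hx.2 hx.1)).and_eventually hA.subset).mono ?_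
    rintro x ⟨⟨hxA, hxl⟩, hxY⟩
    exact ⟨hxA, mul_ne_zero (hxY hxA).2 hxl⟩
  have hcrit := (hA.inter_of_subset hsub).frequently_fderiv_apply_eq_zero hHl
    (inner_rotationGenerator_self a b) hfreq'
  refine HasArc.mono (IsClopenPiece.hasArc_of_not_eventually_eq_zero hE hDan hHl hD
    (hA.inter_of_subset (hsub.mono fun x hx hxZ ↦ hx hxZ.2))
    (hcrit.mono fun x hx ↦ ⟨hx.1.1, hx.2, hx.1.2⟩)) (.of_forall fun x hx ↦ hx.1)

theorem curveSelection (E : Type*) [NormedAddCommGroup E] [InnerProductSpace ℝ E]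
    [FiniteDimensional ℝ E] : CurveSelection E := by
  induction hd : Module.finrank ℝ E using Nat.strong_induction_on generalizing E with
  | _ d ih =>
    have hE (W : Submodule ℝ E) (hW : W ≠ ⊤) : CurveSelection W :=
      ih _ (hd ▸ Submodule.finrank_lt hW) W rfl
    intro g H A hg hH hA hfreq
    by_cases hg₀ : ∀ᶠ x in 𝓝 0, g x = 0
    · rcases le_or_gt (Module.finrank ℝ E) 1 with hdim | hdim
      exacts [hA.hasArc_of_finrank_le_one hdim hH hg₀ hfreq,
        hA.hasArc_of_one_lt_finrank hdim hE hH hg₀ hfreq]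
    · exact hA.hasArc_of_not_eventually_eq_zero hE hg hH hg₀ hfreq

theorem hasArc_of_frequently_mem_locus_nonneg [FiniteDimensional ℝ E] {ψ : E → ℝ}
    (hg : AnalyticAt ℝ g 0) (hH : AnalyticAt ℝ H 0) (hψ : AnalyticAt ℝ ψ 0)
    (hfreq : ∃ᶠ x in 𝓝 0, x ∈ locus g H ∧ 0 ≤ ψ x) : HasArc {x ∈ locus g H | 0 ≤ ψ x} := by
  have hsplit : ∃ᶠ x in 𝓝 0, x ∈ locus (fun x ↦ g x ^ 2 + ψ x ^ 2) H ∨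
      x ∈ {x | 0 < ψ x} ∩ locus g fun x ↦ H x * ψ x := by
    refine hfreq.mono fun x ⟨hx, hxψ⟩ ↦ ?_
    rcases hxψ.eq_or_lt with h | h
    exacts [.inl ⟨by simp [hx.1, ← h], hx.2⟩, .inr ⟨h, hx.1, mul_ne_zero hx.2 h.ne'⟩]
  rcases frequently_or_distrib.1 hsplit with h | h
  · refine (curveSelection E ((hg.fun_pow 2).fun_add (hψ.fun_pow 2)) hH
      ⟨.of_forall fun _ ↦ id, .of_forall fun x hx ↦ .of_forall fun x' hx' ↦ iff_of_true hx' hx⟩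
      h).mono (.of_forall fun x hx ↦ ?_)
    obtain ⟨hxg, hxψ⟩ := (add_eq_zero_iff_of_nonneg (sq_nonneg _) (sq_nonneg _)).1 hx.1
    exact ⟨⟨by simpa using hxg, hx.2⟩, (sq_eq_zero_iff.1 hxψ).ge⟩
  · refine (curveSelection E hg (hH.fun_mul hψ) ⟨.of_forall fun _ hx ↦ hx.2, ?_⟩ h).mono
      (.of_forall fun x hx ↦ ⟨⟨hx.2.1, left_ne_zero_of_mul hx.2.2⟩, hx.1.le⟩)
    filter_upwards [hψ.eventually_continuousAt] with x hx hxY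
    rcases (right_ne_zero_of_mul hxY.2).lt_or_gt with h | h
    · filter_upwards [hx.eventually_lt_const h] with x' hx' _
      exact iff_of_false (fun hmem ↦ hx'.not_gt hmem.1) fun hmem ↦ h.not_gt hmem.1
    · filter_upwards [hx.eventually_const_lt h] with x' hx' hx'Y
      exact iff_of_true ⟨hx', hx'Y⟩ ⟨h, hxY⟩

end CurveSelection

section Osgood

open MeasureTheory Metric

variable {n : ℕ} {ρ : ℝ}

theorem dist_torusMap_apply (hρ : 0 ≤ ρ) (c : Fin n → ℂ) (θ : Fin n → ℝ) (i : Fin n) :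
    dist (torusMap c (fun _ ↦ ρ) θ i) (c i) = ρ := by
  simp [torusMap, abs_of_nonneg hρ]

theorem torusMap_mem_closedBall (hρ : 0 ≤ ρ) (c : Fin n → ℂ) (θ : Fin n → ℝ) :
    torusMap c (fun _ ↦ ρ) θ ∈ closedBall c ρ :=
  (dist_pi_le_iff hρ).2 fun i ↦ (dist_torusMap_apply hρ c θ i).le

theorem torusMap_apply_sub_ne_zero {c z : Fin n → ℂ} (hz : z ∈ ball c ρ) (θ : Fin n → ℝ)
    (i : Fin n) : torusMap c (fun _ ↦ ρ) θ i - z i ≠ 0 := by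
  have hρ : 0 < ρ := dist_nonneg.trans_lt hz
  refine sub_ne_zero.2 fun h ↦ ((dist_pi_lt_iff hρ).1 hz i).ne ?_
  rw [← h, dist_torusMap_apply hρ.le]

theorem continuous_torusMap (c : Fin n → ℂ) (R : Fin n → ℝ) : Continuous (torusMap c R) := by
  unfold torusMap
  fun_prop

theorem continuous_torusMap_apply (c : Fin n → ℂ) (R : Fin n → ℝ) (i : Fin n) :
    Continuous fun θ ↦ torusMap c R θ i :=
  continuous_pi_iff.1 (continuous_torusMap c R) i

theorem continuous_comp_torusMap {f : (Fin n → ℂ) → ℂ} {c : Fin n → ℂ} (hρ : 0 ≤ ρ)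
    (hf : ContinuousOn f (closedBall c ρ)) : Continuous fun θ ↦ f (torusMap c (fun _ ↦ ρ) θ) :=
  hf.comp_continuous (continuous_torusMap c _) (torusMap_mem_closedBall hρ c)

theorem finCons_mem_closedBall {c : Fin (n + 1) → ℂ} {x : ℂ} {y : Fin n → ℂ}
    (hx : x ∈ closedBall (c 0) ρ) (hy : y ∈ closedBall (Fin.tail c) ρ) :
    (Fin.cons x y : Fin (n + 1) → ℂ) ∈ closedBall c ρ := by
  have hρ : 0 ≤ ρ := dist_nonneg.trans hx
  exact (dist_pi_le_iff hρ).2 (Fin.forall_fin_succ.2 ⟨hx, (dist_pi_le_iff hρ).1 hy⟩)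

theorem torusIntegrable_cauchyKernel_mul {f : (Fin n → ℂ) → ℂ} {c z : Fin n → ℂ}
    (hf : ContinuousOn f (closedBall c ρ)) (hz : z ∈ ball c ρ) :
    TorusIntegrable (fun ζ ↦ (∏ i, (ζ i - z i)⁻¹) * f ζ) c fun _ ↦ ρ := by
  have hρ : 0 ≤ ρ := (dist_nonneg.trans_lt hz).le
  have hkernel (i : Fin n) : Continuous fun θ ↦ (torusMap c (fun _ ↦ ρ) θ i - z i)⁻¹ :=
    ((continuous_torusMap_apply c _ i).sub continuous_const).inv₀
      (torusMap_apply_sub_ne_zero hz · i)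
  exact Continuous.integrableOn_Icc
    ((continuous_finsetProd _ fun i _ ↦ hkernel i).mul (continuous_comp_torusMap hρ hf))

theorem torusIntegral_cauchyKernel_mul {f : (Fin n → ℂ) → ℂ} {c z : Fin n → ℂ}
    (hf : ∀ x ∈ closedBall c ρ, DifferentiableAt ℂ f x) (hz : z ∈ ball c ρ) :
    torusIntegral (fun ζ ↦ (∏ i, (ζ i - z i)⁻¹) * f ζ) c (fun _ ↦ ρ) =
      (2 * Real.pi * Complex.I) ^ n * f z := by
  have hρ : 0 < ρ := dist_nonneg.trans_lt hz
  induction n with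
  | zero => simp [torusIntegral_dim0, Subsingleton.elim z c]
  | succ n ih =>
    have hz₀ : z 0 ∈ ball (c 0) ρ := (dist_pi_lt_iff hρ).1 hz 0
    have hz' : Fin.tail z ∈ ball (Fin.tail c) ρ :=
      (dist_pi_lt_iff hρ).2 fun i ↦ (dist_pi_lt_iff hρ).1 hz i.succ
    have hcons (x : ℂ) (y : Fin n → ℂ) (hx : x ∈ closedBall (c 0) ρ)
        (hy : y ∈ closedBall (Fin.tail c) ρ) :
        DifferentiableAt ℂ f (Fin.cons x y : Fin (n + 1) → ℂ) :=
      hf _ (finCons_mem_closedBall hx hy)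
    rw [torusIntegral_succ (torusIntegrable_cauchyKernel_mul
      (fun x hx ↦ (hf x hx).continuousAt.continuousWithinAt) hz)]
    have hinner : ∀ x ∈ sphere (c 0) ρ,
        torusIntegral (fun y ↦ (∏ i, ((Fin.cons x y : Fin (n + 1) → ℂ) i - z i)⁻¹) *
          f (Fin.cons x y)) (Fin.tail c) (fun _ ↦ ρ) =
        (2 * Real.pi * Complex.I) ^ n * ((x - z 0)⁻¹ • f (Fin.cons x (Fin.tail z))) := by
      intro x hx
      simp only [Fin.prod_univ_succ, Fin.cons_zero, Fin.cons_succ, mul_assoc]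
      rw [torusIntegral_const_mul]
      refine (congrArg _ (ih (f := fun y ↦ f (Fin.cons x y)) (fun y hy ↦ ?_) hz')).trans ?_
      · exact (hcons x y (sphere_subset_closedBall hx) hy).comp y (by fun_prop)
      · rw [smul_eq_mul]
        ring
    refine (circleIntegral.integral_congr hρ.le hinner).trans ?_
    rw [circleIntegral.integral_const_mul]
    have hslice : DifferentiableOn ℂ (fun x ↦ f (Fin.cons x (Fin.tail z))) (closedBall (c 0) ρ) :=
      fun x hx ↦ ((hcons x _ hx (ball_subset_closedBall hz')).comp x
        (by fun_prop)).differentiableWithinAt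
    rw [hslice.circleIntegral_sub_inv_smul hz₀, Fin.cons_self_tail, smul_eq_mul]
    ring

theorem analyticAt_integral_continuousMap {𝕜 E G X : Type*} [RCLike 𝕜] [NormedAddCommGroup E]
    [NormedSpace 𝕜 E] [NormedAddCommGroup G] [NormedSpace 𝕜 G] [NormedSpace ℝ G]
    [SMulCommClass ℝ 𝕜 G] [CompleteSpace G] [TopologicalSpace X] [CompactSpace X]
    [MeasurableSpace X] [BorelSpace X] [SecondCountableTopologyEither X G] (μ : Measure X)
    [IsFiniteMeasure μ] {Φ : E → C(X, G)} {z : E} (hΦ : AnalyticAt 𝕜 Φ z) :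
    AnalyticAt 𝕜 (fun y ↦ ∫ x, Φ y x ∂μ) z := by
  have hint (φ : C(X, G)) : L1.integralCLM' 𝕜 (φ.toLp 1 μ 𝕜) = ∫ x, φ x ∂μ := by
    rw [← L1.integral_eq', L1.integral_eq_integral]
    exact integral_congr_ae (ContinuousMap.coeFn_toLp μ φ)
  simp only [← hint]
  exact ((L1.integralCLM' 𝕜).comp (ContinuousMap.toLp 1 μ 𝕜)).analyticAt _ |>.comp hΦ

theorem ringInverse_continuousMap_apply {X : Type*} [TopologicalSpace X] {φ : C(X, ℂ)}
    (hφ : ∀ x, φ x ≠ 0) (x : X) : Ring.inverse φ x = (φ x)⁻¹ :=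
  eq_inv_of_mul_eq_one_left <| DFunLike.congr_fun
    (Ring.inverse_mul_cancel φ (φ.isUnit_iff_forall_ne_zero.2 hφ)) x

theorem analyticAt_prod_ringInverse_sub_algebraMap {X : Type*} [TopologicalSpace X] [CompactSpace X]
    {u : Fin n → C(X, ℂ)} {z : Fin n → ℂ} (hu : ∀ i x, u i x - z i ≠ 0) :
    AnalyticAt ℂ (fun w : Fin n → ℂ ↦ ∏ i, Ring.inverse (u i - algebraMap ℂ C(X, ℂ) (w i))) z := by
  refine Finset.analyticAt_fun_prod _ fun i _ ↦ ?_
  obtain ⟨v, hv⟩ : IsUnit (u i - algebraMap ℂ C(X, ℂ) (z i)) :=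
    (ContinuousMap.isUnit_iff_forall_ne_zero _).2 (hu i)
  have hsub : AnalyticAt ℂ (fun w : Fin n → ℂ ↦ u i - algebraMap ℂ C(X, ℂ) (w i)) z :=
    analyticAt_const.sub <| (((Algebra.linearMap ℂ C(X, ℂ)).toContinuousLinearMap).comp
      (ContinuousLinearMap.proj (R := ℂ) (φ := fun _ : Fin n ↦ ℂ) i)).analyticAt z
  exact (hv ▸ analyticAt_inverse v : AnalyticAt ℂ Ring.inverse _).fun_comp hsub

-- The kernel depends analytically on `z` as an element of the Banach algebra `C(K, ℂ)`.
theorem analyticAt_torusIntegral_cauchyKernel_mul {f : (Fin n → ℂ) → ℂ} {c z : Fin n → ℂ}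
    (hf : ContinuousOn f (closedBall c ρ)) (hz : z ∈ ball c ρ) :
    AnalyticAt ℂ
      (fun w ↦ torusIntegral (fun ζ ↦ (∏ i, (ζ i - w i)⁻¹) * f ζ) c (fun _ ↦ ρ)) z := by
  have hρ : 0 < ρ := dist_nonneg.trans_lt hz
  let K : Set (Fin n → ℝ) := Set.Icc 0 fun _ ↦ 2 * Real.pi
  have hK : MeasurableSet K := measurableSet_Icc
  have : CompactSpace K := isCompact_iff_compactSpace.1 isCompact_Icc
  let μ : Measure K := volume.comap Subtype.val
  have : IsFiniteMeasure μ := ⟨by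
    rw [comap_subtype_coe_apply hK]
    simpa using! measure_Icc_lt_top⟩
  let u (i : Fin n) : C(K, ℂ) := .restrict K ⟨_, continuous_torusMap_apply c (fun _ ↦ ρ) i⟩
  let weight : C(K, ℂ) := .restrict K
    ⟨fun θ ↦ (∏ i, (ρ : ℂ) * Complex.exp (θ i * Complex.I) * Complex.I) *
      f (torusMap c (fun _ ↦ ρ) θ), .mul (by fun_prop) (continuous_comp_torusMap hρ.le hf)⟩
  have hu {w : Fin n → ℂ} (hw : w ∈ ball c ρ) (i : Fin n) (θ : K) : u i θ - w i ≠ 0 :=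
    torusMap_apply_sub_ne_zero hw θ i
  refine (analyticAt_integral_continuousMap μ (analyticAt_const (v := weight) |>.fun_mul
    (analyticAt_prod_ringInverse_sub_algebraMap (hu hz)))).congr ?_
  filter_upwards [isOpen_ball.mem_nhds hz] with w hw
  rw [torusIntegral, ← integral_subtype_comap hK]
  refine integral_congr_ae (.of_forall fun θ ↦ ?_)
  have hinv (i : Fin n) : Ring.inverse (u i - algebraMap ℂ C(K, ℂ) (w i)) θ = (u i θ - w i)⁻¹ :=
    ringInverse_continuousMap_apply (hu hw i) θ
  simp only [ContinuousMap.mul_apply, ContinuousMap.prod_apply, hinv, smul_eq_mul]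
  simp only [weight, u, ContinuousMap.restrict_apply, ContinuousMap.coe_mk]
  ring

theorem analyticAt_pi_of_eventually_differentiableAt {f : (Fin n → ℂ) → ℂ} {c : Fin n → ℂ}
    (hf : ∀ᶠ x in 𝓝 c, DifferentiableAt ℂ f x) : AnalyticAt ℂ f c := by
  obtain ⟨ρ, hρ, hball⟩ := nhds_basis_closedBall.eventually_iff.1 hf
  have hpi : (2 * Real.pi * Complex.I) ^ n ≠ 0 := pow_ne_zero n Complex.two_pi_I_ne_zero
  refine ((analyticAt_const (v := ((2 * Real.pi * Complex.I) ^ n)⁻¹)).fun_mul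
    (analyticAt_torusIntegral_cauchyKernel_mul
      (fun x hx ↦ (hball hx).continuousAt.continuousWithinAt) (mem_ball_self hρ))).congr ?_
  filter_upwards [ball_mem_nhds c hρ] with z hz
  rw [torusIntegral_cauchyKernel_mul (fun x hx ↦ hball hx) hz, inv_mul_cancel_left₀ hpi]

theorem analyticAt_of_eventually_differentiableAt {E : Type*} [NormedAddCommGroup E]
    [NormedSpace ℂ E] [FiniteDimensional ℂ E] {f : E → ℂ} {c : E}
    (hf : ∀ᶠ x in 𝓝 c, DifferentiableAt ℂ f x) : AnalyticAt ℂ f c := by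
  let e : E ≃L[ℂ] (Fin (Module.finrank ℂ E) → ℂ) := .ofFinrankEq (by simp)
  have hfe : AnalyticAt ℂ (f ∘ e.symm) (e c) := by
    refine analyticAt_pi_of_eventually_differentiableAt ?_
    have hsymm : Tendsto e.symm (𝓝 (e c)) (𝓝 c) := by
      simpa using e.symm.continuous.tendsto (e c)
    filter_upwards [hsymm.eventually hf] with y hy
    exact hy.comp y e.symm.differentiableAt
  simpa [Function.comp_def] using hfe.fun_comp (e.analyticAt c)

end Osgood

section RadialDirection

open ComplexOrder ComplexConjugate

variable {𝕜 F : Type*} [RCLike 𝕜] [NormedAddCommGroup F] [InnerProductSpace 𝕜 F] [NormedSpace ℝ F]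
  [IsScalarTower ℝ 𝕜 F] [CompleteSpace F]

theorem exists_inner_deriv_eq_pow_mul {γ : ℝ → F} (hγ : AnalyticAt ℝ γ 0) (hγ₀ : γ 0 = 0)
    (hne : ¬∀ᶠ t in 𝓝 0, γ t = 0) :
    ∃ (N : ℕ) (u : ℝ → 𝕜), ContinuousAt u 0 ∧ 0 < u 0 ∧
      ∀ᶠ t in 𝓝 0, inner 𝕜 (γ t) (deriv γ t) = (t : 𝕜) ^ N * u t := by
  obtain ⟨k, w, hw, hw₀, hγw⟩ := hγ.exists_eventuallyEq_pow_smul_nonzero_iff.2 hne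
  simp only [sub_zero] at hγw
  obtain ⟨k, rfl⟩ : ∃ j, k = j + 1 := by
    refine Nat.exists_eq_succ_of_ne_zero ?_
    rintro rfl
    exact hw₀ (by simpa [hγ₀] using hγw.self_of_nhds.symm)
  refine ⟨2 * k + 1, fun t ↦ (k + 1) * inner 𝕜 (w t) (w t) + t * inner 𝕜 (w t) (deriv w t),
    ?_, ?_, ?_⟩
  · have := hw.continuousAt
    have := hw.deriv.continuousAt
    fun_prop
  · have hpos : 0 < inner 𝕜 (w 0) (w 0) := by
      rw [inner_self_eq_norm_sq_to_K]
      exact_mod_cast pow_pos (norm_pos_iff.2 hw₀) 2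
    simpa using mul_pos (by exact_mod_cast k.succ_pos : (0 : 𝕜) < k + 1) hpos
  · filter_upwards [hγw, hγw.eventually_nhds, hw.eventually_analyticAt] with t ht hγt hwt
    have hderiv : deriv γ t = t ^ (k + 1) • deriv w t + ((k + 1) * t ^ k) • w t := by
      rw [EventuallyEq.deriv_eq hγt, deriv_fun_smul (by fun_prop) hwt.differentiableAt]
      simp
    rw [ht, hderiv]
    simp only [inner_add_right, inner_smul_left_eq_smul, inner_smul_right_eq_smul,
      RCLike.real_smul_eq_coe_mul]
    push_cast
    ring

theorem eventually_abs_im_lt_re {α : Type*} {l : Filter α} {u : α → ℂ} {c : ℂ}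
    (hu : Tendsto u l (𝓝 c)) (hc : 0 < c) : ∀ᶠ a in l, |(u a).im| < (u a).re := by
  obtain ⟨hre, him⟩ := Complex.lt_def.1 hc
  refine ((Complex.continuous_im.tendsto c).comp hu).abs.eventually_lt
    ((Complex.continuous_re.tendsto c).comp hu) ?_
  rw [← him]
  simpa using hre

theorem abs_im_lt_re_of_real_mul_eq {z w : ℂ} {r s : ℝ} (hr : 0 < r) (hs : 0 < s)
    (h : r * z = s * w) (hw : |w.im| < w.re) : |z.im| < z.re := by
  have hre := congrArg Complex.re h
  have him := congrArg Complex.im h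
  rw [Complex.re_ofReal_mul, Complex.re_ofReal_mul] at hre
  rw [Complex.im_ofReal_mul, Complex.im_ofReal_mul] at him
  refine lt_of_mul_lt_mul_left ?_ hr.le
  rw [← abs_of_pos hr, ← abs_mul, him, abs_mul, abs_of_pos hs, abs_of_pos hr, hre]
  exact mul_lt_mul_of_pos_left hw hs

end RadialDirection

section ParallelGradient

open ComplexOrder ComplexConjugate

variable {E : Type*} [NormedAddCommGroup E] [InnerProductSpace ℂ E] {f : E → ℂ}

/-- The gradient of `f` at `z` is a multiple of `z` (unless `z = 0`). -/
def IsGradParallel (f : E → ℂ) (z : E) : Prop :=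
  ∀ v, (‖z‖ ^ 2 : ℂ) * fderiv ℂ f z v = fderiv ℂ f z z * inner ℂ z v

theorem IsGradParallel.norm_sq_mul_inner_deriv {γ : ℝ → E} {t : ℝ} (h : IsGradParallel f (γ t))
    (hf : DifferentiableAt ℂ f (γ t)) (hγ : DifferentiableAt ℝ γ t) :
    (‖γ t‖ ^ 2 : ℂ) * inner ℂ (f (γ t)) (deriv (f ∘ γ) t) =
      fderiv ℂ f (γ t) (γ t) * conj (f (γ t)) * inner ℂ (γ t) (deriv γ t) := by
  have hderiv : deriv (f ∘ γ) t = fderiv ℂ f (γ t) (deriv γ t) :=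
    ((hf.hasFDerivAt.restrictScalars ℝ).comp_hasDerivAt t hγ.hasDerivAt).deriv
  rw [hderiv, RCLike.inner_apply, ← mul_assoc, h]
  ring

theorem eventually_abs_im_lt_re_of_arc [CompleteSpace E] (hf : AnalyticAt ℂ f 0) (hf₀ : f 0 = 0)
    {γ : ℝ → E} (hγ : AnalyticAt ℝ γ 0) (hγ₀ : γ 0 = 0)
    (hγf : ∀ᶠ t in 𝓝[>] 0, f (γ t) ≠ 0 ∧ IsGradParallel f (γ t)) :
    ∀ᶠ t in 𝓝[>] 0, |(fderiv ℂ f (γ t) (γ t) * conj (f (γ t))).im| <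
      (fderiv ℂ f (γ t) (γ t) * conj (f (γ t))).re := by
  have hφ : AnalyticAt ℝ (f ∘ γ) 0 := (hf.restrictScalars (𝕜 := ℝ)).comp_of_eq hγ hγ₀
  have hφ₀ : (f ∘ γ) 0 = 0 := by simp [hγ₀, hf₀]
  have hφne : ¬∀ᶠ t in 𝓝 0, (f ∘ γ) t = 0 := fun h ↦
    (hγf.and (nhdsWithin_le_nhds h)).exists.elim fun t ht ↦ ht.1.1 ht.2
  have hγne : ¬∀ᶠ t in 𝓝 0, γ t = 0 := fun h ↦ hφne (h.mono fun t ht ↦ by simp [ht, hf₀])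
  obtain ⟨M, u, hu, hu₀, hφu⟩ := exists_inner_deriv_eq_pow_mul (𝕜 := ℂ) hφ hφ₀ hφne
  obtain ⟨N, v, hv, hv₀, hγv⟩ := exists_inner_deriv_eq_pow_mul (𝕜 := ℂ) hγ hγ₀ hγne
  have huv : ∀ᶠ t in 𝓝 0, |(u t * conj (v t)).im| < (u t * conj (v t)).re :=
    eventually_abs_im_lt_re (hu.mul (Complex.continuous_conj.continuousAt.comp hv))
      (mul_pos hu₀ (star_pos_iff.2 hv₀))
  filter_upwards [self_mem_nhdsWithin, hγf, nhdsWithin_le_nhds hφu, nhdsWithin_le_nhds hγv,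
    nhdsWithin_le_nhds huv, nhdsWithin_le_nhds (hv.eventually_ne hv₀.ne'),
    nhdsWithin_le_nhds hγ.eventually_analyticAt,
    (tendsto_nhdsGT_of_analyticAt hγ hγ₀).eventually hf.eventually_analyticAt]
    with t (ht : 0 < t) ⟨hfγ, hpar⟩ hφt hγt huvt hvt hγa hfa
  have hγt₀ : γ t ≠ 0 := fun h ↦ hfγ (by rw [h, hf₀])
  have hkey := hpar.norm_sq_mul_inner_deriv hfa.differentiableAt hγa.differentiableAt
  rw [hγt] at hkey
  change _ * inner ℂ ((f ∘ γ) t) _ = _ at hkey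
  rw [hφt] at hkey
  refine abs_im_lt_re_of_real_mul_eq (r := t ^ N * Complex.normSq (v t)) (s := ‖γ t‖ ^ 2 * t ^ M)
    (mul_pos (pow_pos ht N) (Complex.normSq_pos.2 hvt)) (by positivity) ?_ huvt
  push_cast
  rw [← Complex.mul_conj]
  linear_combination -(conj (v t)) * hkey

theorem isGradParallel_iff_sum_normSq_eq_zero {ι : Type*} [Fintype ι] (b : OrthonormalBasis ι ℂ E)
    {z : E} : IsGradParallel f z ↔ ∑ i, Complex.normSq
      ((‖z‖ ^ 2 : ℂ) * fderiv ℂ f z (b i) - fderiv ℂ f z z * inner ℂ z (b i)) = 0 := by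
  rw [Finset.sum_eq_zero_iff_of_nonneg fun i _ ↦ Complex.normSq_nonneg _]
  simp only [Finset.mem_univ, forall_const, Complex.normSq_eq_zero, sub_eq_zero]
  refine ⟨fun h i ↦ h _, fun h v ↦ ?_⟩
  refine LinearMap.congr_fun (f := (‖z‖ ^ 2 : ℂ) • (fderiv ℂ f z : E →ₗ[ℂ] ℂ))
    (g := fderiv ℂ f z z • (innerSL ℂ z : E →ₗ[ℂ] ℂ)) (b.toBasis.ext fun i ↦ ?_) v
  simpa using h i

theorem analyticAt_normSq_comp {X : Type*} [NormedAddCommGroup X] [NormedSpace ℝ X] {u : X → ℂ}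
    {x : X} (hu : AnalyticAt ℝ u x) : AnalyticAt ℝ (fun y ↦ Complex.normSq (u y)) x := by
  simp only [Complex.normSq_eq_norm_sq]
  exact (hu.contDiffAt (n := ω)).norm_sq ℂ |>.analyticAt

variable [FiniteDimensional ℂ E]

theorem analyticAt_fderiv_apply_self_mul_conj (hf : AnalyticAt ℂ f 0) :
    AnalyticAt ℝ (fun z ↦ fderiv ℂ f z z * conj (f z)) 0 := by
  have := FiniteDimensional.complete ℂ E
  exact ((analyticAt_clm_apply hf.fderiv analyticAt_id).restrictScalars (𝕜 := ℝ)).mul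
    ((Complex.conjCLE.analyticAt _).comp hf.restrictScalars)

theorem analyticAt_sum_normSq_isGradParallel {ι : Type*} [Fintype ι] (b : ι → E)
    (hf : AnalyticAt ℂ f 0) :
    AnalyticAt ℝ (fun z ↦ ∑ i, Complex.normSq
      ((‖z‖ ^ 2 : ℂ) * fderiv ℂ f z (b i) - fderiv ℂ f z z * inner ℂ z (b i))) 0 := by
  have := FiniteDimensional.complete ℂ E
  have hnorm : AnalyticAt ℝ (fun z : E ↦ ((‖z‖ ^ 2 : ℝ) : ℂ)) 0 :=
    (Complex.ofRealCLM.analyticAt _).comp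
      (contDiff_norm_sq (n := ω) ℂ (E := E)).contDiffAt.analyticAt
  push_cast at hnorm
  have hderiv {u : E → E} (hu : AnalyticAt ℂ u 0) : AnalyticAt ℝ (fun z ↦ fderiv ℂ f z (u z)) 0 :=
    (analyticAt_clm_apply hf.fderiv hu).restrictScalars
  refine Finset.analyticAt_fun_sum _ fun i _ ↦ analyticAt_normSq_comp ?_
  exact (hnorm.mul (hderiv analyticAt_const)).sub ((hderiv analyticAt_id).mul
    (contDiff_id.inner ℂ contDiff_const : ContDiff ℝ ω _).contDiffAt.analyticAt)

theorem eventually_abs_im_lt_re_of_isGradParallel (hf : AnalyticAt ℂ f 0) (hf₀ : f 0 = 0) :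
    ∀ᶠ z in 𝓝 0, f z ≠ 0 → IsGradParallel f z →
      |(fderiv ℂ f z z * conj (f z)).im| < (fderiv ℂ f z z * conj (f z)).re := by
  have := FiniteDimensional.complete ℂ E
  have : FiniteDimensional ℝ E := FiniteDimensional.complexToReal E
  let : InnerProductSpace ℝ E := InnerProductSpace.complexToReal
  let b := stdOrthonormalBasis ℂ E
  set q : E → ℂ := fun z ↦ fderiv ℂ f z z * conj (f z)
  have hq : AnalyticAt ℝ q 0 := analyticAt_fderiv_apply_self_mul_conj hf
  have hq_re := (Complex.reCLM.analyticAt _).comp hq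
  have hq_im := (Complex.imCLM.analyticAt _).comp hq
  set g : E → ℝ := fun z ↦ ∑ i, Complex.normSq
    ((‖z‖ ^ 2 : ℂ) * fderiv ℂ f z (b i) - fderiv ℂ f z z * inner ℂ z (b i))
  set H : E → ℝ := fun z ↦ Complex.normSq (f z)
  have hmem {z : E} : z ∈ locus g H ↔ IsGradParallel f z ∧ f z ≠ 0 :=
    and_congr (isGradParallel_iff_sum_normSq_eq_zero b).symm Complex.normSq_eq_zero.not
  have no_arc {ψ : E → ℝ} (hψ : AnalyticAt ℝ ψ 0) (hψq : ∀ z, 0 ≤ ψ z → (q z).re ≤ |(q z).im|) :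
      ∀ᶠ z in 𝓝 0, z ∈ locus g H → ψ z < 0 := by
    by_contra hfreq
    obtain ⟨γ, hγ, hγ₀, hγmem⟩ := hasArc_of_frequently_mem_locus_nonneg
      (analyticAt_sum_normSq_isGradParallel b hf) (analyticAt_normSq_comp hf.restrictScalars) hψ
      (by simpa using hfreq)
    obtain ⟨t, ht, hlt⟩ := (hγmem.and (eventually_abs_im_lt_re_of_arc hf hf₀ hγ hγ₀
      (hγmem.mono fun t ht ↦ (hmem.1 ht.1).symm))).exists
    exact (hψq _ ht.2).not_gt hlt
  filter_upwards [no_arc (hq_im.sub hq_re) fun z hz ↦ (sub_nonneg.1 hz).trans (le_abs_self _),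
    no_arc (hq_im.neg.sub hq_re) fun z hz ↦ (sub_nonneg.1 hz).trans (neg_le_abs _)]
    with z hpos hneg hfz hz
  have hz := hmem.2 ⟨hz, hfz⟩
  exact max_lt (sub_neg.1 (hpos hz)) (sub_neg.1 (hneg hz))

end ParallelGradient

section LogarithmicGradient

open ComplexConjugate

theorem abs_arg_lt_of_abs_im_lt_re {c : ℂ} (h : |c.im| < c.re) :
    |Complex.arg c| < Real.pi / 4 := by
  have hre : 0 < c.re := (abs_nonneg _).trans_lt h
  obtain ⟨harg, harg'⟩ := abs_lt.1 (Complex.abs_arg_lt_pi_div_two_iff.2 (.inl hre))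
  rw [← Real.arctan_tan harg harg', Complex.tan_arg, ← Real.arctan_one, abs_lt,
    ← Real.arctan_neg, Real.arctan_strictMono.lt_iff_lt, Real.arctan_strictMono.lt_iff_lt,
    lt_div_iff₀ hre, div_lt_iff₀ hre, neg_one_mul, one_mul]
  exact abs_lt.1 h

variable {E : Type*} [NormedAddCommGroup E] [InnerProductSpace ℂ E] [CompleteSpace E] {f : E → ℂ}
  {z : E} {lam : ℂ}

theorem fderiv_apply_of_smul_gradient_eq_smul (hfz : f z ≠ 0)
    (h : (conj (f z))⁻¹ • gradient f z = lam • z) (v : E) :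
    fderiv ℂ f z v = f z * conj lam * inner ℂ z v := by
  have hgrad : gradient f z = (conj (f z) * lam) • z := by
    rw [mul_smul, ← h, smul_inv_smul₀ ((_root_.map_ne_zero _).2 hfz)]
  rw [← inner_gradient_left, hgrad, inner_smul_left, map_mul, Complex.conj_conj]

theorem isGradParallel_of_smul_gradient_eq_smul (hfz : f z ≠ 0)
    (h : (conj (f z))⁻¹ • gradient f z = lam • z) : IsGradParallel f z := fun v ↦ by
  have hself : inner ℂ z z = (‖z‖ ^ 2 : ℂ) := inner_self_eq_norm_sq_to_K z
  simp only [fderiv_apply_of_smul_gradient_eq_smul hfz h, hself]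
  ring

theorem abs_im_lt_re_of_smul_gradient_eq_smul (hz : z ≠ 0) (hfz : f z ≠ 0)
    (h : (conj (f z))⁻¹ • gradient f z = lam • z)
    (hlt : |(fderiv ℂ f z z * conj (f z)).im| < (fderiv ℂ f z z * conj (f z)).re) :
    |lam.im| < lam.re := by
  have hself : inner ℂ z z = (‖z‖ ^ 2 : ℂ) := inner_self_eq_norm_sq_to_K z
  have hq : ((‖f z‖ ^ 2 * ‖z‖ ^ 2 : ℝ) : ℂ) * conj lam =
      (1 : ℝ) * (fderiv ℂ f z z * conj (f z)) := by
    rw [fderiv_apply_of_smul_gradient_eq_smul hfz h, hself]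
    push_cast
    rw [← Complex.mul_conj']
    ring
  simpa using abs_im_lt_re_of_real_mul_eq (by positivity) one_pos hq hlt

theorem stmt_12_general [FiniteDimensional ℂ E] {U : Set E} (hU : IsOpen U) (h0U : (0 : E) ∈ U)
    (hf : DifferentiableOn ℂ f U) (hf0 : f 0 = 0) :
    ∃ ε₀ > (0 : ℝ), ∀ z, ‖z‖ ≤ ε₀ → f z ≠ 0 →
      LinearIndependent ℂ ![z, (conj (f z))⁻¹ • gradient f z] ∨
      ∃ lam : ℂ, lam ≠ 0 ∧ (conj (f z))⁻¹ • gradient f z = lam • z ∧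
        |Complex.arg lam| < Real.pi / 4 := by
  have hfa : AnalyticAt ℂ f 0 := analyticAt_of_eventually_differentiableAt <|
    (hU.eventually_mem h0U).mono fun z hz ↦ hf.differentiableAt (hU.mem_nhds hz)
  obtain ⟨ε₀, hε₀, hball⟩ := Metric.nhds_basis_closedBall.eventually_iff.1
    (eventually_abs_im_lt_re_of_isGradParallel hfa hf0)
  refine ⟨ε₀, hε₀, fun z hz hfz ↦ or_iff_not_imp_left.2 fun hdep ↦ ?_⟩
  have hz₀ : z ≠ 0 := fun h ↦ hfz (h ▸ hf0)
  rw [LinearIndependent.pair_iff' hz₀] at hdep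
  push Not at hdep
  obtain ⟨lam, hlam⟩ := hdep
  have hpar := isGradParallel_of_smul_gradient_eq_smul hfz hlam.symm
  have hlt : |lam.im| < lam.re := abs_im_lt_re_of_smul_gradient_eq_smul hz₀ hfz hlam.symm
    (hball (mem_closedBall_zero_iff.2 hz) hfz hpar)
  refine ⟨lam, ?_, hlam.symm, abs_arg_lt_of_abs_im_lt_re hlt⟩
  rintro rfl
  simp at hlt

end LogarithmicGradient

theorem stmt_12 (n : ℕ) (hn : 1 ≤ n)
    (U : Set (EuclideanSpace ℂ (Fin n))) (hU : IsOpen U)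
    (h0U : (0 : EuclideanSpace ℂ (Fin n)) ∈ U)
    (f : EuclideanSpace ℂ (Fin n) → ℂ) (hf : DifferentiableOn ℂ f U) (hf0 : f 0 = 0) :
    ∃ ε₀ > (0 : ℝ), ∀ z ∈ U, 0 < ‖z‖ → ‖z‖ ≤ ε₀ → f z ≠ 0 →
      LinearIndependent ℂ ![z, gradLog f z] ∨
      ∃ lam : ℂ, lam ≠ 0 ∧ gradLog f z = lam • z ∧ |Complex.arg lam| < Real.pi / 4 := by
  obtain ⟨ε₀, hε₀, h⟩ := stmt_12_general hU h0U hf hf0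
  exact ⟨ε₀, hε₀, fun z _ _ ↦ h z⟩
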